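/- arXiv:2103.00205 — 7 statements merged into one kernel-verified Lean document; each statement's English description precedes it below -/
import Mathlib

section
/- For every z ∈ ℝ, the function ρ̂ admits the integral representation ρ̂(z) = ∫_ℝ e^{izx} · 2(1 − sin x / x) U(dx), where (1 − sin x / x) is interpreted as 0 at x = 0. In particular, ρ̂ is the Fourier transform of the finite measure ρ(dx) = 2(1 − sin x / x) U(dx). -/
open MeasureTheory Filter Asymptotics

lemma aux_sfinite (U : Measure ℝ) (hU0 : U {0} = 0) 
    (hUfin : ∫⁻ x, ENNReal.ofReal (min 1 (x ^ 2)) ∂U < ⊤) : SFinite U := by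
  have hm : Measurable fun x : ℝ => ENNReal.ofReal (min 1 (x ^ 2)) := by fun_prop
  have hne : ∀ᵐ x ∂U, ENNReal.ofReal (min 1 (x ^ 2)) ≠ 0 := by
    have : ∀ᵐ x ∂U, x ≠ 0 := by
      rw [ae_iff]; simpa using hU0
    filter_upwards [this] with x hx
    have : 0 < min 1 (x ^ 2) := by positivity
    exact (ENNReal.ofReal_pos.2 this).ne'
  have := withDensity_inv_same hm hne (Eventually.of_forall fun x => ENNReal.ofReal_ne_top)
  have : IsFiniteMeasure (U.withDensity fun x => ENNReal.ofReal (min 1 (x ^ 2))) :=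
    isFiniteMeasure_withDensity hUfin.ne
  rw [← withDensity_inv_same hm hne (Eventually.of_forall fun x => ENNReal.ofReal_ne_top)]
  infer_instance

lemma aux_exp (u : ℝ) : ‖Complex.exp (Complex.I * u) - 1 - Complex.I * u‖ ≤ 2 * u ^ 2 := by
  have hn : ‖Complex.I * (u : ℂ)‖ = |u| := by simp
  by_cases hu : |u| ≤ 1
  · have := Complex.norm_exp_sub_one_sub_id_le (x := Complex.I * u) (by rw [hn]; exact hu)
    rw [hn, sq_abs] at this
    nlinarith [sq_nonneg u]
  · have h1 := Real.norm_exp_I_mul_ofReal_sub_one_le (x := u)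
    have h2 := norm_sub_le (Complex.exp (Complex.I * u) - 1) (Complex.I * u)
    rw [hn] at h2
    rw [Real.norm_eq_abs] at h1
    push Not at hu
    nlinarith [sq_abs u]

lemma aux_h (h : ℝ → ℝ) (hbdd : ∃ C, ∀ x, |h x| ≤ C)
    (hsmall : (fun x => h x - 1) =o[nhds (0 : ℝ)] fun x => x) :
    ∃ K, 0 ≤ K ∧ ∀ x, |x - x * h x| ≤ K * x ^ 2 := by
  obtain ⟨C, hC⟩ := hbdd
  have hC0 : 0 ≤ C := (abs_nonneg _).trans (hC 0)
  have h1 := hsmall.bound (zero_lt_one)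
  obtain ⟨δ, hδ, hb⟩ := Metric.eventually_nhds_iff.1 h1
  refine ⟨1 + (1 + C) / δ, by positivity, fun x => ?_⟩
  have e : |x - x * h x| = |x| * |h x - 1| := by
    rw [← abs_mul, abs_sub_comm]; ring_nf
  rw [e, ← sq_abs x]
  have hp : 0 ≤ (1 + C) / δ := by positivity
  have hx0 := abs_nonneg x
  by_cases hx : |x| < δ
  · have := hb (y := x) (by simpa using hx)
    simp only [Real.norm_eq_abs, one_mul] at this
    nlinarith [mul_le_mul_of_nonneg_left this hx0, mul_nonneg hp (sq_nonneg |x|)]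
  · push Not at hx
    have h3 : |h x - 1| ≤ 1 + C := by
      have := abs_sub (h x) 1
      have := hC x
      simp only [abs_one] at *
      linarith
    have h4 : 1 + C ≤ (1 + C) / δ * |x| := by
      rw [div_mul_eq_mul_div, le_div_iff₀ hδ]
      exact mul_le_mul_of_nonneg_left hx (by positivity)
    nlinarith [mul_le_mul_of_nonneg_left (h3.trans h4) hx0, sq_nonneg |x|]

lemma aux_bound (h : ℝ → ℝ) (hbdd : ∃ C, ∀ x, |h x| ≤ C)
    (hsmall : (fun x => h x - 1) =o[nhds (0 : ℝ)] fun x => x)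
    (hxh : ∃ C, ∀ x, |x * h x| ≤ C) :
    ∃ K, 0 ≤ K ∧ ∀ z x : ℝ, ‖Complex.exp (Complex.I * (z : ℂ) * (x : ℂ)) - 1
        - Complex.I * (z : ℂ) * (x : ℂ) * (h x : ℂ)‖ ≤
          (2 * z ^ 2 + K * |z| + 2) * min 1 (x ^ 2) := by
  obtain ⟨K, hK0, hK⟩ := aux_h h hbdd hsmall
  obtain ⟨C, hC⟩ := hxh
  have hC0 : 0 ≤ C := (abs_nonneg _).trans (hC 0)
  refine ⟨K + C, by positivity, fun z x => ?_⟩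
  have hz := abs_nonneg z
  rcases le_total (x ^ 2) 1 with hx | hx
  · rw [min_eq_right hx]
    have h1 := aux_exp (z * x)
    have h2 : ‖Complex.I * (z : ℂ) * ((x - x * h x : ℝ) : ℂ)‖ ≤ |z| * (K * x ^ 2) := by
      rw [norm_mul, norm_mul, Complex.norm_I, one_mul, Complex.norm_real, Complex.norm_real]
      exact mul_le_mul_of_nonneg_left (hK x) hz
    have h3 := norm_add_le (Complex.exp (Complex.I * ((z * x : ℝ) : ℂ)) - 1 
      - Complex.I * ((z * x : ℝ) : ℂ)) (Complex.I * (z : ℂ) * ((x - x * h x : ℝ) : ℂ))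
    have e : Complex.exp (Complex.I * ((z * x : ℝ) : ℂ)) - 1 
      - Complex.I * ((z * x : ℝ) : ℂ) + Complex.I * (z : ℂ) * ((x - x * h x : ℝ) : ℂ) =
      Complex.exp (Complex.I * (z : ℂ) * (x : ℂ)) - 1
        - Complex.I * (z : ℂ) * (x : ℂ) * (h x : ℂ) := by
      push_cast; ring_nf
    rw [e] at h3
    refine (h3.trans (add_le_add h1 h2)).trans ?_
    have : 0 ≤ C * |z| * x ^ 2 + 2 * x ^ 2 := by positivity
    nlinarith
  · rw [min_eq_left hx]
    have h1 : ‖Complex.exp (Complex.I * (z : ℂ) * (x : ℂ))‖ = 1 := by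
      rw [mul_assoc, ← Complex.ofReal_mul, Complex.norm_exp_I_mul_ofReal]
    have h2 : ‖Complex.I * (z : ℂ) * (x : ℂ) * (h x : ℂ)‖ ≤ |z| * C := by
      rw [mul_assoc, ← Complex.ofReal_mul, norm_mul, norm_mul, Complex.norm_I, one_mul,
        Complex.norm_real, Complex.norm_real]
      exact mul_le_mul_of_nonneg_left (hC x) hz
    have h3 := norm_sub_le (Complex.exp (Complex.I * (z : ℂ) * (x : ℂ)) - 1)
      (Complex.I * (z : ℂ) * (x : ℂ) * (h x : ℂ))
    have h4 := norm_sub_le (Complex.exp (Complex.I * (z : ℂ) * (x : ℂ))) 1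
    rw [h1, norm_one] at h4
    have : 0 ≤ K * |z| := by positivity
    nlinarith [sq_nonneg z]

lemma aux_inner (z x c : ℝ) (hx : x ≠ 0) :
    ∫ t in (-1 : ℝ)..1, ((Complex.exp (Complex.I * (z : ℂ) * (x : ℂ)) - 1
        - Complex.I * (z : ℂ) * (x : ℂ) * (c : ℂ)) -
      (Complex.exp (Complex.I * ((z + t : ℝ) : ℂ) * (x : ℂ)) - 1
        - Complex.I * ((z + t : ℝ) : ℂ) * (x : ℂ) * (c : ℂ))) =
    Complex.exp (Complex.I * (z : ℂ) * (x : ℂ)) * ((2 * (1 - Real.sin x / x) : ℝ) : ℂ) := by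
  have hx' : (x : ℂ) ≠ 0 := by exact_mod_cast hx
  have e : ∀ t : ℝ, ((Complex.exp (Complex.I * (z : ℂ) * (x : ℂ)) - 1
        - Complex.I * (z : ℂ) * (x : ℂ) * (c : ℂ)) -
      (Complex.exp (Complex.I * ((z + t : ℝ) : ℂ) * (x : ℂ)) - 1
        - Complex.I * ((z + t : ℝ) : ℂ) * (x : ℂ) * (c : ℂ))) =
      Complex.exp (Complex.I * z * x) - Complex.exp (Complex.I * z * x) * 
        Complex.exp (Complex.I * x * t) + (Complex.I * x * c) * ((t : ℝ) : ℂ) := by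
    intro t
    rw [← Complex.exp_add]
    push_cast
    ring_nf
  simp_rw [e]
  rw [intervalIntegral.integral_add (Continuous.intervalIntegrable (by fun_prop) _ _)
    (Continuous.intervalIntegrable (by fun_prop) _ _),
    intervalIntegral.integral_sub (Continuous.intervalIntegrable (by fun_prop) _ _)
    (Continuous.intervalIntegrable (by fun_prop) _ _),
    intervalIntegral.integral_const_mul, intervalIntegral.integral_const_mul,
    integral_exp_mul_complex (by simp [hx]), intervalIntegral.integral_ofReal,
    intervalIntegral.integral_const, integral_id]
  have hs : Complex.exp (Complex.I * x * (1:ℝ)) - Complex.exp (Complex.I * x * (-1:ℝ)) = 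
      2 * Complex.I * Complex.sin x := by
    rw [Complex.sin]
    have : Complex.I * x * (1:ℝ) = x * Complex.I := by push_cast; ring
    have h2 : Complex.I * x * (-1:ℝ) = -x * Complex.I := by push_cast; ring
    rw [this, h2]
    linear_combination (-1 : ℂ) * (Complex.exp (-x * Complex.I) - Complex.exp (x * Complex.I)) * Complex.I_sq
  rw [hs]
  push_cast
  rw [Complex.real_smul]
  push_cast
  field_simp
  ring

/-- For a Lévy measure `U`, truncation function `h`, and cumulant
`ψ(z) = iγz − σ²z²/2 + ∫ (e^{izx} − 1 − izx·h(x)) U(dx)`, the function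
`ρ̂(z) = ∫_{−1}^{1} (ψ(z) − ψ(z+λ)) dλ − σ²/3` is the Fourier transform of the measure
`ρ(dx) = 2(1 − sin x / x) U(dx)`, where `1 − sin x / x` is interpreted as `0` at `x = 0`. -/
theorem statement0
    (U : Measure ℝ) (hU0 : U {0} = 0)
    (hUfin : ∫⁻ x, ENNReal.ofReal (min 1 (x ^ 2)) ∂U < ⊤)
    (h : ℝ → ℝ) (hmeas : Measurable h)
    (hbdd : ∃ C, ∀ x, |h x| ≤ C)
    (hsmall : (fun x => h x - 1) =o[nhds (0 : ℝ)] fun x => x)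
    (hlarge : h =O[Filter.cocompact ℝ] fun x => x⁻¹)
    (hxh : ∃ C, ∀ x, |x * h x| ≤ C)
    (γ σ : ℝ) (hσ : 0 ≤ σ)
    (ψ : ℝ → ℂ)
    (hψ : ∀ z : ℝ, ψ z = Complex.I * (γ : ℂ) * (z : ℂ) - (σ : ℂ) ^ 2 * (z : ℂ) ^ 2 / 2 +
      ∫ x, (Complex.exp (Complex.I * (z : ℂ) * (x : ℂ)) - 1
        - Complex.I * (z : ℂ) * (x : ℂ) * (h x : ℂ)) ∂U)
    (ρhat : ℝ → ℂ)
    (hρ : ∀ z : ℝ, ρhat z = (∫ t in (-1 : ℝ)..1, (ψ z - ψ (z + t))) - (σ : ℂ) ^ 2 / 3) :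
    ∀ z : ℝ, ρhat z = ∫ x, Complex.exp (Complex.I * (z : ℂ) * (x : ℂ)) *
      ((if x = 0 then 0 else 2 * (1 - Real.sin x / x) : ℝ) : ℂ) ∂U := by
  intro z
  have := aux_sfinite U hU0 hUfin
  obtain ⟨K, hK0, hK⟩ := aux_bound h hbdd hsmall hxh
  have hmin : Integrable (fun x : ℝ => min 1 (x ^ 2)) U := by
    refine ⟨by fun_prop, ?_⟩
    rw [hasFiniteIntegral_iff_ofReal (Eventually.of_forall fun x => by positivity)]
    exact hUfin
  set F : ℝ → ℝ → ℂ := fun z x => Complex.exp (Complex.I * (z : ℂ) * (x : ℂ)) - 1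
        - Complex.I * (z : ℂ) * (x : ℂ) * (h x : ℂ) with hF
  have hFi : ∀ z, Integrable (F z) U := fun z =>
    (hmin.const_mul (2 * z ^ 2 + K * |z| + 2)).mono'
      (by simp only [hF]; fun_prop : Measurable (F z)).aestronglyMeasurable 
      (Eventually.of_forall fun x => hK z x)
  have hae : ∀ᵐ p ∂((volume.restrict (Set.Ioc (-1 : ℝ) 1)).prod U), p.1 ∈ Set.Ioc (-1 : ℝ) 1 := by
    have h0 : ∀ᵐ t ∂(volume.restrict (Set.Ioc (-1 : ℝ) 1)), t ∈ Set.Ioc (-1 : ℝ) 1 :=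
      ae_restrict_mem measurableSet_Ioc
    exact (Measure.quasiMeasurePreserving_fst (μ := volume.restrict (Set.Ioc (-1 : ℝ) 1)) (ν := U)).ae h0
  have hprod : Integrable (Function.uncurry fun t x => F z x - F (z + t) x)
      ((volume.restrict (Set.Ioc (-1 : ℝ) 1)).prod U) := by
    have hb := (hmin.const_mul ((2 * z ^ 2 + K * |z| + 2) + 
      (2 * (|z| + 1) ^ 2 + K * (|z| + 1) + 2))).comp_snd (volume.restrict (Set.Ioc (-1 : ℝ) 1))
    refine hb.mono' ?_ ?_
    · have h1 : Measurable fun p : ℝ × ℝ => F z p.2 := 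
        by simp only [hF]; fun_prop
      have h2 : Measurable fun p : ℝ × ℝ => F (z + p.1) p.2 := 
        by simp only [hF]; fun_prop
      exact (h1.sub h2).aestronglyMeasurable
    · have : ∀ᵐ p ∂((volume.restrict (Set.Ioc (-1 : ℝ) 1)).prod U), p.1 ∈ Set.Ioc (-1 : ℝ) 1 :=
        hae
      filter_upwards [this] with p hp
      have h1 := norm_sub_le (F z p.2) (F (z + p.1) p.2)
      have h2 := hK z p.2
      have h3 := hK (z + p.1) p.2
      have h4 : |z + p.1| ≤ |z| + 1 := 
        (abs_add_le _ _).trans (by have := abs_le.2 ⟨hp.1.le, hp.2⟩; linarith)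
      have h5 : 2 * (z + p.1) ^ 2 + K * |z + p.1| + 2 ≤ 2 * (|z| + 1) ^ 2 + K * (|z| + 1) + 2 := by
        rw [← sq_abs (z + p.1)]
        gcongr
      have h6 : (0:ℝ) ≤ min 1 (p.2 ^ 2) := by positivity
      have h7 := mul_le_mul_of_nonneg_right h5 h6
      simp only [Function.uncurry]
      rw [add_mul]
      exact h1.trans (add_le_add h2 (h3.trans h7))
  have hswap := integral_integral_swap hprod
  have hψ2 : ∀ t, ψ z - ψ (z + t) = 
      ((-Complex.I * γ + σ ^ 2 * z) * (t : ℂ) + (σ ^ 2 / 2 : ℂ) * ((t ^ 2 : ℝ) : ℂ)) + 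
        ∫ x, (F z x - F (z + t) x) ∂U := by
    intro t
    rw [integral_sub (hFi z) (hFi (z + t)), hψ z, hψ (z + t)]
    push_cast
    simp only [hF]
    push_cast
    ring
  rw [hρ]
  simp_rw [hψ2]
  have hI : IntervalIntegrable (fun t => ∫ x, (F z x - F (z + t) x) ∂U) volume (-1) 1 := by
    rw [intervalIntegrable_iff_integrableOn_Ioc_of_le (by norm_num)]
    exact hprod.integral_prod_left
  rw [intervalIntegral.integral_add (Continuous.intervalIntegrable (by fun_prop) _ _) hI,
    intervalIntegral.integral_add (Continuous.intervalIntegrable (by fun_prop) _ _)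
    (Continuous.intervalIntegrable (by fun_prop) _ _),
    intervalIntegral.integral_const_mul, intervalIntegral.integral_const_mul,
    intervalIntegral.integral_ofReal, intervalIntegral.integral_ofReal,
    integral_id, integral_pow]
  rw [intervalIntegral.integral_of_le (by norm_num : (-1 : ℝ) ≤ 1), hswap]
  have hfin : ∫ x, ∫ t in Set.Ioc (-1 : ℝ) 1, (F z x - F (z + t) x) ∂volume ∂U = 
     ∫ x, Complex.exp (Complex.I * (z : ℂ) * (x : ℂ)) *
      ((if x = 0 then 0 else 2 * (1 - Real.sin x / x) : ℝ) : ℂ) ∂U := by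
    apply integral_congr_ae
    have : ∀ᵐ x ∂U, x ≠ 0 := by
      rw [ae_iff]; simpa using hU0
    filter_upwards [this] with x hx
    rw [if_neg hx, ← aux_inner z x (h x) hx, 
      intervalIntegral.integral_of_le (by norm_num : (-1 : ℝ) ≤ 1)]
  rw [hfin]
  push_cast
  ring
end

section
/- (Inversion formula (2).) Assume ∫_{|x|>1} x² U(dx) < ∞, and let −∞ < a < b < ∞ with U({a}) = U({b}) = 0. Then ∫_{[a,b]} x² U(dx) = −(1/(2π)) · lim_{R→∞} ∫_{−R}^{R} (ψ''(z) + σ²) · (∫_a^b e^{−izx} dx) dz. -/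
open MeasureTheory Filter Asymptotics

/-- Sine integral. -/
noncomputable def SiFun (t : ℝ) : ℝ := ∫ x in (0:ℝ)..t, Real.sinc x

lemma sinc_mul_self' (x : ℝ) : Real.sinc x * x = Real.sin x := by
  by_cases hx : x = 0
  · simp [hx]
  · rw [Real.sinc_of_ne_zero hx]; field_simp

lemma int_exp_le {t : ℝ} (ht : 0 < t) : ∫ x in (0:ℝ)..t, Real.exp (-(x * t)) ≤ 1 / t := by
  have : ∫ x in (0:ℝ)..t, Real.exp (-(x * t)) =
      (-Real.exp (-(t * t)) / t) - (-Real.exp (-(0 * t)) / t) := by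
    apply intervalIntegral.integral_eq_sub_of_hasDerivAt (f := fun x => -Real.exp (-(x * t)) / t)
    · intro x _
      have := ((((hasDerivAt_id x).mul_const t).neg.exp).neg).div_const t
      refine HasDerivAt.congr_deriv this ?_
      simp only [Pi.neg_apply, id]; field_simp
    · apply Continuous.intervalIntegrable; fun_prop
  rw [this]
  have := Real.exp_pos (-(t*t))
  simp only [zero_mul, neg_zero, Real.exp_zero]
  rw [← sub_div]
  gcongr
  linarith

lemma double_one (t x : ℝ) :
    ∫ s in (0:ℝ)..t, Real.sin x * Real.exp (-(x * s)) =
      Real.sinc x - Real.sinc x * Real.exp (-(x * t)) := by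
  have : ∫ s in (0:ℝ)..t, Real.sin x * Real.exp (-(x * s)) =
      (-(Real.sinc x * Real.exp (-(x * t)))) - (-(Real.sinc x * Real.exp (-(x * 0)))) := by
    apply intervalIntegral.integral_eq_sub_of_hasDerivAt
      (f := fun s => -(Real.sinc x * Real.exp (-(x * s))))
    · intro s _
      have := (((((hasDerivAt_id s).const_mul x).neg.exp).const_mul (Real.sinc x))).neg
      refine HasDerivAt.congr_deriv this ?_
      rw [← sinc_mul_self']
      simp only [Pi.neg_apply, id]; ring
    · apply Continuous.intervalIntegrable; fun_prop
  rw [this]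
  simp; ring

lemma double_two (t s : ℝ) :
    ∫ x in (0:ℝ)..t, Real.sin x * Real.exp (-(x * s)) =
      1 / (1 + s ^ 2) - Real.exp (-(t * s)) * (Real.cos t + s * Real.sin t) / (1 + s ^ 2) := by
  have hs : 1 + s ^ 2 ≠ 0 := by positivity
  have : ∫ x in (0:ℝ)..t, Real.sin x * Real.exp (-(x * s)) =
      (-(Real.exp (-(t * s)) * (Real.cos t + s * Real.sin t) / (1 + s ^ 2))) -
      (-(Real.exp (-(0 * s)) * (Real.cos 0 + s * Real.sin 0) / (1 + s ^ 2))) := by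
    apply intervalIntegral.integral_eq_sub_of_hasDerivAt
      (f := fun x => -(Real.exp (-(x * s)) * (Real.cos x + s * Real.sin x) / (1 + s ^ 2)))
    · intro x _
      have := (((((hasDerivAt_id x).mul_const s).neg.exp).mul
        ((Real.hasDerivAt_cos x).add ((Real.hasDerivAt_sin x).const_mul s))).div_const (1 + s^2)).neg
      refine HasDerivAt.congr_deriv this ?_
      simp only [Pi.neg_apply, Pi.add_apply, id]; field_simp; ring
    · apply Continuous.intervalIntegrable; fun_prop
  rw [this]
  simp; ring

lemma si_arctan {t : ℝ} (ht : 0 < t) : |SiFun t - Real.arctan t| ≤ 3 / t := by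
  have hsw : ∫ x in (0:ℝ)..t, ∫ s in (0:ℝ)..t, Real.sin x * Real.exp (-(x * s)) =
      ∫ s in (0:ℝ)..t, ∫ x in (0:ℝ)..t, Real.sin x * Real.exp (-(x * s)) := by
    apply intervalIntegral_intervalIntegral_swap
    have hc : Continuous (Function.uncurry fun x s : ℝ => Real.sin x * Real.exp (-(x * s))) := by
      unfold Function.uncurry; fun_prop
    have : IntegrableOn (Function.uncurry fun x s : ℝ => Real.sin x * Real.exp (-(x * s)))
        (Set.uIcc 0 t ×ˢ Set.uIcc 0 t) :=
      hc.continuousOn.integrableOn_compact (isCompact_uIcc.prod isCompact_uIcc)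
    exact this.mono_set (Set.prod_mono Set.uIoc_subset_uIcc Set.uIoc_subset_uIcc)
  simp_rw [double_one, double_two] at hsw
  have hpos : ∀ s : ℝ, 1 + s ^ 2 ≠ 0 := fun s => by positivity
  have hE : Continuous fun s : ℝ => Real.exp (-(t * s)) * (Real.cos t + s * Real.sin t) / (1 + s ^ 2) := by
    apply Continuous.div (by fun_prop) (by fun_prop) hpos
  rw [intervalIntegral.integral_sub (by apply Continuous.intervalIntegrable; fun_prop)
    (by apply Continuous.intervalIntegrable; fun_prop),
    intervalIntegral.integral_sub
    (by apply Continuous.intervalIntegrable; exact Continuous.div (by fun_prop) (by fun_prop) hpos)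
    (hE.intervalIntegrable _ _), integral_one_div_one_add_sq, Real.arctan_zero, sub_zero] at hsw
  have b1 : ‖∫ x in (0:ℝ)..t, Real.sinc x * Real.exp (-(x * t))‖ ≤ 1 / t := by
    refine le_trans (intervalIntegral.norm_integral_le_of_norm_le ht.le
      (g := fun x => Real.exp (-(x * t))) ?_ ?_) (int_exp_le ht)
    · refine ae_of_all _ fun x _ => ?_
      rw [norm_mul, Real.norm_eq_abs, Real.norm_eq_abs, abs_of_pos (Real.exp_pos _)]
      have := Real.abs_sinc_le_one x
      have := Real.exp_pos (-(x*t))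
      nlinarith
    · apply Continuous.intervalIntegrable; fun_prop
  have b2 : ‖∫ s in (0:ℝ)..t, Real.exp (-(t * s)) * (Real.cos t + s * Real.sin t) / (1 + s ^ 2)‖
      ≤ 2 / t := by
    refine le_trans (intervalIntegral.norm_integral_le_of_norm_le ht.le
      (g := fun x => 2 * Real.exp (-(x * t))) ?_ ?_) ?_
    · refine ae_of_all _ fun s hs => ?_
      rw [norm_div, norm_mul, Real.norm_eq_abs, Real.norm_eq_abs, Real.norm_eq_abs,
        abs_of_pos (Real.exp_pos _), abs_of_pos (by positivity : (0:ℝ) < 1 + s^2),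
        div_le_iff₀ (by positivity)]
      have h1 : |Real.cos t + s * Real.sin t| ≤ 2 * (1 + s^2) := by
        refine (abs_add_le _ _).trans ?_
        rw [abs_mul, abs_of_pos hs.1]
        have := Real.abs_cos_le_one t
        have := Real.abs_sin_le_one t
        nlinarith [hs.1, sq_nonneg (s-1)]
      rw [mul_comm t s]
      have := Real.exp_pos (-(s*t))
      nlinarith
    · apply Continuous.intervalIntegrable; fun_prop
    · rw [intervalIntegral.integral_const_mul]
      have := int_exp_le ht
      calc _ ≤ 2 * (1 / t) := by gcongr
        _ = _ := by ring
  have : SiFun t - Real.arctan t = (∫ x in (0:ℝ)..t, Real.sinc x * Real.exp (-(x * t)))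
    - ∫ s in (0:ℝ)..t, Real.exp (-(t * s)) * (Real.cos t + s * Real.sin t) / (1 + s ^ 2) := by
    unfold SiFun; linarith
  rw [this]
  refine (norm_sub_le _ _).trans ((add_le_add b1 b2).trans (le_of_eq ?_))
  ring

lemma si_neg (t : ℝ) : SiFun (-t) = - SiFun t := by
  unfold SiFun
  have := intervalIntegral.integral_comp_neg (a := 0) (b := t) (fun x => Real.sinc x)
  simp only [Real.sinc_neg, neg_zero] at this
  rw [this, ← intervalIntegral.integral_symm]

lemma si_bdd (t : ℝ) : |SiFun t| ≤ 5 := by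
  have key : ∀ t : ℝ, 0 ≤ t → |SiFun t| ≤ 5 := by
    intro t ht
    rcases le_total t 1 with h | h
    · have := intervalIntegral.norm_integral_le_of_norm_le_const (a := 0) (b := t) (C := 1)
        (f := Real.sinc) (fun x _ => Real.abs_sinc_le_one x)
      rw [Real.norm_eq_abs, sub_zero, abs_of_nonneg ht] at this
      unfold SiFun
      linarith
    · have h1 := si_arctan (by linarith : 0 < t)
      have h2 : 3 / t ≤ 3 := by rw [div_le_iff₀ (by linarith)]; linarith
      have h3 := Real.arctan_lt_pi_div_two t
      have h4 := Real.neg_pi_div_two_lt_arctan t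
      have h5 := Real.pi_lt_four
      rw [abs_le] at *
      constructor <;> linarith
  rcases le_total 0 t with h | h
  · exact key t h
  · have := key (-t) (by linarith)
    rwa [si_neg, abs_neg] at this

lemma si_tendsto : Tendsto SiFun atTop (nhds (Real.pi / 2)) := by
  have h1 : Tendsto (fun t => SiFun t - Real.arctan t) atTop (nhds 0) := by
    apply squeeze_zero_norm' (a := fun t => 3 / t)
    · filter_upwards [eventually_gt_atTop 0] with t ht using si_arctan ht
    · exact tendsto_const_nhds.div_atTop tendsto_id
  have h2 := h1.add (tendsto_nhds_of_tendsto_nhdsWithin Real.tendsto_arctan_atTop)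
  simpa using h2

lemma si_cont : Continuous SiFun :=
  intervalIntegral.continuous_primitive (fun a b => Real.continuous_sinc.intervalIntegrable a b) 0
lemma int_exp_sym (R u : ℝ) :
    ∫ z in (-R)..R, Complex.exp (Complex.I * z * u) = ((2 * R * Real.sinc (R * u) : ℝ) : ℂ) := by
  by_cases hu : u = 0
  · simp [hu]; ring
  · have h := intervalIntegral.integral_comp_mul_right (a := -R) (b := R)
      (fun t : ℝ => Complex.exp (t * Complex.I)) hu
    rw [neg_mul, integral_exp_mul_I_eq_sinc] at h
    have h2 : ∀ z : ℝ, Complex.exp (Complex.I * z * u) =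
        Complex.exp (((z * u : ℝ) : ℂ) * Complex.I) := by
      intro z; congr 1; push_cast; ring
    simp_rw [h2]
    rw [h]
    have : (u : ℂ) ≠ 0 := by exact_mod_cast hu
    rw [Complex.real_smul]
    push_cast
    field_simp

lemma kernel_eq (R a b x : ℝ) :
    ∫ z in (-R)..R, Complex.exp (Complex.I * z * x) *
        ∫ y in a..b, Complex.exp (-(Complex.I * z * y)) =
      ((2 * (SiFun (R * (x - a)) - SiFun (R * (x - b))) : ℝ) : ℂ) := by
  have h1 : ∀ z : ℝ, Complex.exp (Complex.I * z * x) *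
        ∫ y in a..b, Complex.exp (-(Complex.I * z * y)) =
        ∫ y in a..b, Complex.exp (Complex.I * z * ((x - y : ℝ) : ℂ)) := by
    intro z
    rw [← intervalIntegral.integral_const_mul]
    congr 1; ext y
    rw [← Complex.exp_add]; congr 1; push_cast; ring
  simp_rw [h1]
  rw [intervalIntegral_intervalIntegral_swap]
  · simp_rw [int_exp_sym]
    rw [intervalIntegral.integral_ofReal]
    congr 1
    have h2 := intervalIntegral.integral_comp_sub_left (a := a) (b := b)
      (fun v => 2 * R * Real.sinc (R * v)) x
    rw [h2]
    simp_rw [mul_assoc]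
    rw [intervalIntegral.integral_const_mul, intervalIntegral.integral_const_mul,
      intervalIntegral.mul_integral_comp_mul_left]
    unfold SiFun
    rw [← intervalIntegral.integral_interval_sub_left
      (Real.continuous_sinc.intervalIntegrable _ _) (Real.continuous_sinc.intervalIntegrable _ _)]
  · have hc : Continuous (Function.uncurry fun z y : ℝ =>
        Complex.exp (Complex.I * z * ((x - y : ℝ) : ℂ))) := by
      unfold Function.uncurry; fun_prop
    have : IntegrableOn (Function.uncurry fun z y : ℝ =>
        Complex.exp (Complex.I * z * ((x - y : ℝ) : ℂ)))
        (Set.uIcc (-R) R ×ˢ Set.uIcc a b) :=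
      hc.continuousOn.integrableOn_compact (isCompact_uIcc.prod isCompact_uIcc)
    exact this.mono_set (Set.prod_mono Set.uIoc_subset_uIcc Set.uIoc_subset_uIcc)

lemma inner_cont (a b : ℝ) :
    Continuous fun z : ℝ => ∫ y in a..b, Complex.exp (-(Complex.I * z * y)) := by
  apply intervalIntegral.continuous_parametric_intervalIntegral_of_continuous'
  unfold Function.uncurry; fun_prop

lemma inner_bound (a b z : ℝ) :
    ‖∫ y in a..b, Complex.exp (-(Complex.I * z * y))‖ ≤ |b - a| := by
  have := intervalIntegral.norm_integral_le_of_norm_le_const (a := a) (b := b) (C := 1)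
        (f := fun y : ℝ => Complex.exp (-(Complex.I * z * y))) (fun y _ => by
          rw [Complex.norm_exp]; simp)
  simpa using this

lemma fubini_main (ν : Measure ℝ) [IsFiniteMeasure ν] (R a b : ℝ) :
    ∫ z in (-R)..R, (∫ x, Complex.exp (Complex.I * z * x) ∂ν) *
        ∫ y in a..b, Complex.exp (-(Complex.I * z * y)) =
    ∫ x, ((2 * (SiFun (R * (x - a)) - SiFun (R * (x - b))) : ℝ) : ℂ) ∂ν := by
  simp_rw [← integral_mul_const]
  rw [intervalIntegral_integral_swap]
  · simp_rw [kernel_eq]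
  · have hm : Continuous (Function.uncurry fun (z x : ℝ) => Complex.exp (Complex.I * z * x) *
        ∫ y in a..b, Complex.exp (-(Complex.I * z * y))) := by
      unfold Function.uncurry
      exact (by fun_prop : Continuous fun p : ℝ × ℝ => Complex.exp (Complex.I * p.1 * p.2)).mul
        ((inner_cont a b).comp continuous_fst)
    haveI : IsFiniteMeasure (volume.restrict (Set.uIoc (-R) R)) := by
      unfold Set.uIoc; infer_instance
    apply Integrable.of_bound hm.aestronglyMeasurable |b - a|
    refine ae_of_all _ fun p => ?_
    simp only [Function.uncurry]
    rw [norm_mul]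
    have h1 : ‖Complex.exp (Complex.I * p.1 * p.2)‖ = 1 := by rw [Complex.norm_exp]; simp
    rw [h1, one_mul]
    exact inner_bound a b p.1

lemma si_lim (u : ℝ) (hu : u ≠ 0) :
    Tendsto (fun R : ℝ => SiFun (R * u)) atTop
      (nhds (if 0 < u then Real.pi / 2 else -(Real.pi / 2))) := by
  rcases lt_or_gt_of_ne hu with h | h
  · rw [if_neg (not_lt.mpr h.le)]
    have := (si_tendsto.comp (tendsto_id.atTop_mul_const (neg_pos.mpr h))).neg
    refine this.congr fun R => ?_
    simp [si_neg]
  · rw [if_pos h]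
    exact si_tendsto.comp (tendsto_id.atTop_mul_const h)

lemma inversion (ν : Measure ℝ) [IsFiniteMeasure ν] (a b : ℝ) (hab : a < b)
    (ha : ν {a} = 0) (hb : ν {b} = 0) :
    Tendsto (fun R : ℝ => ∫ z in (-R)..R, (∫ x, Complex.exp (Complex.I * z * x) ∂ν) *
        ∫ y in a..b, Complex.exp (-(Complex.I * z * y))) atTop
      (nhds (((2 * Real.pi) * ν.real (Set.Icc a b) : ℝ) : ℂ)) := by
  simp_rw [fubini_main]
  have hint : (((2 * Real.pi) * ν.real (Set.Icc a b) : ℝ) : ℂ) =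
      ∫ x, (Set.Icc a b).indicator (fun _ => ((2 * Real.pi : ℝ) : ℂ)) x ∂ν := by
    rw [integral_indicator measurableSet_Icc]
    simp; ring
  rw [hint]
  apply tendsto_integral_filter_of_dominated_convergence (fun _ => (20 : ℝ))
  · refine Eventually.of_forall fun R => ?_
    apply Continuous.aestronglyMeasurable
    have := si_cont
    fun_prop
  · refine Eventually.of_forall fun R => ae_of_all _ fun x => ?_
    rw [Complex.norm_real, Real.norm_eq_abs]
    have h1 := abs_le.mp (si_bdd (R * (x - a)))
    have h2 := abs_le.mp (si_bdd (R * (x - b)))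
    rw [abs_le]; constructor <;> linarith [h1.1, h1.2, h2.1, h2.2]
  · exact integrable_const _
  · have hxa : ∀ᵐ x ∂ν, x ≠ a := by simpa [ae_iff] using ha
    have hxb : ∀ᵐ x ∂ν, x ≠ b := by simpa [ae_iff] using hb
    filter_upwards [hxa, hxb] with x h1 h2
    have t := (((si_lim (x - a) (sub_ne_zero.mpr h1)).sub
      (si_lim (x - b) (sub_ne_zero.mpr h2))).const_mul 2)
    have t2 := (Complex.continuous_ofReal.tendsto _).comp t
    refine t2.congr' (Eventually.of_forall fun R => rfl) |>.trans (le_of_eq ?_)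
    congr 1
    by_cases hx : x ∈ Set.Icc a b
    · have h3 : 0 < x - a := sub_pos.mpr (lt_of_le_of_ne hx.1 h1.symm)
      have h4 : ¬ 0 < x - b := by have := hx.2; linarith
      rw [Set.indicator_of_mem hx, if_pos h3, if_neg h4]
      congr 1; ring
    · rw [Set.indicator_of_notMem hx]
      by_cases h3 : 0 < x - a
      · have h4 : 0 < x - b := by
          by_contra h; exact hx ⟨by linarith, by linarith⟩
        rw [if_pos h3, if_pos h4]; simp
      · have h4 : ¬ 0 < x - b := by linarith
        rw [if_neg h3, if_neg h4]; simp

lemma trunc_bound (h : ℝ → ℝ) (hsmall : (fun x => h x - 1) =o[nhds (0 : ℝ)] fun x => x)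
    (hxh : ∃ C, ∀ x, |x * h x| ≤ C) :
    ∃ C, 0 ≤ C ∧ ∀ x, |x * (1 - h x)| ≤ C * x ^ 2 := by
  obtain ⟨C, hC⟩ := hxh
  have hC0 : 0 ≤ C := (abs_nonneg _).trans (hC 0)
  have h1 := hsmall.bound (zero_lt_one)
  obtain ⟨δ, hδ, hd⟩ := Metric.eventually_nhds_iff.mp h1
  refine ⟨1 + 1 / δ + C / δ ^ 2, by positivity, fun x => ?_⟩
  have hx2 : |x| * |x| = x ^ 2 := by rw [← sq, sq_abs]
  have hx0 := abs_nonneg x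
  by_cases hx : |x| < δ
  · have := hd (y := x) (by simpa [Real.dist_eq] using hx)
    simp only [Real.norm_eq_abs, one_mul] at this
    rw [abs_mul, abs_sub_comm]
    calc |x| * |h x - 1| ≤ |x| * |x| := by gcongr
      _ = 1 * x ^ 2 := by rw [hx2, one_mul]
      _ ≤ _ := by
        gcongr
        have : 0 ≤ 1 / δ := by positivity
        have : 0 ≤ C / δ ^ 2 := by positivity
        linarith
  · push Not at hx
    have e : x * (1 - h x) = x - x * h x := by ring
    have a1 : |x| ≤ 1 / δ * x ^ 2 := by
      rw [← hx2, one_div, ← mul_assoc]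
      have : 1 ≤ δ⁻¹ * |x| := by rw [← div_eq_inv_mul, le_div_iff₀ hδ]; linarith
      nlinarith
    have a2 : C ≤ C / δ ^ 2 * x ^ 2 := by
      have : 1 ≤ x ^ 2 / δ ^ 2 := by
        rw [le_div_iff₀ (by positivity), ← hx2]; nlinarith
      calc C = C * 1 := by ring
        _ ≤ C * (x ^ 2 / δ ^ 2) := by gcongr
        _ = _ := by ring
    rw [e]
    refine (abs_sub _ _).trans ?_
    have := hC x
    nlinarith [sq_nonneg x]

/-- Integrand in the Lévy–Khintchine formula. -/
noncomputable def lkF (h : ℝ → ℝ) (z x : ℝ) : ℂ :=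
  Complex.exp (Complex.I * (z : ℂ) * (x : ℂ)) - 1
        - Complex.I * (z : ℂ) * (x : ℂ) * (h x : ℂ)

/-- Its derivative. -/
noncomputable def lkF' (h : ℝ → ℝ) (z x : ℝ) : ℂ :=
  Complex.I * x * Complex.exp (Complex.I * (z : ℂ) * (x : ℂ)) - Complex.I * (x : ℂ) * (h x : ℂ)

/-- Its second derivative. -/
noncomputable def lkF'' (z x : ℝ) : ℂ :=
  -((x : ℂ) ^ 2 * Complex.exp (Complex.I * (z : ℂ) * (x : ℂ)))

lemma exp_deriv (z x : ℝ) : HasDerivAt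
    (fun z : ℝ => Complex.exp (Complex.I * (z : ℂ) * (x : ℂ)))
    (Complex.I * x * Complex.exp (Complex.I * (z : ℂ) * (x : ℂ))) z := by
  have := ((((hasDerivAt_id z).ofReal_comp).const_mul Complex.I).mul_const (x : ℂ)).cexp
  refine HasDerivAt.congr_deriv this ?_
  simp only [id]; push_cast; ring

lemma lkF_deriv (h : ℝ → ℝ) (z x : ℝ) : HasDerivAt (fun z => lkF h z x) (lkF' h z x) z := by
  have h2 := ((((hasDerivAt_id z).ofReal_comp).const_mul Complex.I).mul_const (x : ℂ)).mul_const
    (h x : ℂ)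
  refine HasDerivAt.congr_deriv (((exp_deriv z x).sub_const 1).sub h2) ?_
  simp [lkF']

lemma lkF'_deriv (h : ℝ → ℝ) (z x : ℝ) : HasDerivAt (fun z => lkF' h z x) (lkF'' z x) z := by
  refine HasDerivAt.congr_deriv (((exp_deriv z x).const_mul (Complex.I * x)).sub_const _) ?_
  simp only [lkF'']
  linear_combination (x : ℂ) ^ 2 * Complex.exp (Complex.I * (z : ℂ) * (x : ℂ)) * Complex.I_sq

lemma lkF'_bound {h : ℝ → ℝ} {C : ℝ} (hC : ∀ x, |x * (1 - h x)| ≤ C * x ^ 2) (z x : ℝ) :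
    ‖lkF' h z x‖ ≤ (|z| + C) * x ^ 2 := by
  have e : lkF' h z x = Complex.I * x * (Complex.exp (Complex.I * ((z * x : ℝ) : ℂ)) - 1)
      + Complex.I * ((x * (1 - h x) : ℝ) : ℂ) := by
    simp only [lkF']; push_cast; rw [← mul_assoc Complex.I (z : ℂ)]; ring
  rw [e]
  refine (norm_add_le _ _).trans ?_
  rw [norm_mul, norm_mul, norm_mul, Complex.norm_I, Complex.norm_real, Complex.norm_real,
    one_mul, one_mul, add_mul]
  refine add_le_add ?_ (hC x)
  calc _ ≤ ‖x‖ * ‖z * x‖ := by gcongr; exact Real.norm_exp_I_mul_ofReal_sub_one_le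
    _ = _ := by
      rw [norm_mul, Real.norm_eq_abs, Real.norm_eq_abs, ← sq_abs x]; ring

lemma lkF_bound {h : ℝ → ℝ} {C : ℝ} (hC : ∀ x, |x * (1 - h x)| ≤ C * x ^ 2) (z x : ℝ) :
    ‖lkF h z x‖ ≤ (|z| + C) * |z| * x ^ 2 := by
  have := (convex_closedBall (0:ℝ) |z|).norm_image_sub_le_of_norm_hasDerivWithin_le
    (f := fun z => lkF h z x) (f' := fun z => lkF' h z x) (C := (|z| + C) * x ^ 2)
    (x := 0) (y := z) (fun w _ => (lkF_deriv h w x).hasDerivWithinAt)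
    (fun w hw => (lkF'_bound hC w x).trans (by
      have : |w| ≤ |z| := by simpa using hw
      gcongr))
    (by simp) (by simp)
  simp only [sub_zero, Real.norm_eq_abs] at this
  have e : lkF h 0 x = 0 := by simp [lkF]
  rw [e, sub_zero] at this
  linarith

lemma sq_integrable (U : Measure ℝ)
    (hUfin : ∫⁻ x, ENNReal.ofReal (min 1 (x ^ 2)) ∂U < ⊤)
    (hU2 : ∫⁻ x in {x : ℝ | 1 < |x|}, ENNReal.ofReal (x ^ 2) ∂U < ⊤) :
    ∫⁻ x, ENNReal.ofReal (x ^ 2) ∂U < ⊤ := by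
  have hS : MeasurableSet {x : ℝ | 1 < |x|} := measurableSet_lt (by fun_prop) (by fun_prop)
  rw [← lintegral_add_compl _ hS]
  refine ENNReal.add_lt_top.mpr ⟨hU2, lt_of_le_of_lt ?_ hUfin⟩
  refine le_trans ?_ (setLIntegral_le_lintegral {x : ℝ | 1 < |x|}ᶜ _)
  refine setLIntegral_mono' hS.compl fun x hx => ?_
  have hx' : |x| ≤ 1 := by simpa using hx
  rw [min_eq_right ((sq_le_one_iff_abs_le_one x).mpr hx')]

lemma psi_deriv2 (U : Measure ℝ) (hsq : Integrable (fun x : ℝ => x ^ 2) U)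
    (h : ℝ → ℝ) (hmeas : Measurable h) {C : ℝ} (hC0 : 0 ≤ C)
    (hC : ∀ x, |x * (1 - h x)| ≤ C * x ^ 2) (γ σ : ℝ) (ψ : ℝ → ℂ)
    (hψ : ∀ z : ℝ, ψ z = Complex.I * (γ : ℂ) * (z : ℂ) - (σ : ℂ) ^ 2 * (z : ℂ) ^ 2 / 2 +
      ∫ x, lkF h z x ∂U) (z : ℝ) :
    deriv (deriv ψ) z = - (σ : ℂ) ^ 2 + ∫ x, lkF'' z x ∂U := by
  have mF : ∀ z, AEStronglyMeasurable (lkF h z) U := fun z => by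
    unfold lkF; exact Measurable.aestronglyMeasurable (by fun_prop)
  have mF' : ∀ z, AEStronglyMeasurable (lkF' h z) U := fun z => by
    unfold lkF'; exact Measurable.aestronglyMeasurable (by fun_prop)
  have mF'' : ∀ z, AEStronglyMeasurable (lkF'' z) U := fun z => by
    unfold lkF''; exact Measurable.aestronglyMeasurable (by fun_prop)
  have iF : ∀ z, Integrable (lkF h z) U := fun z =>
    (hsq.const_mul ((|z| + C) * |z|)).mono' (mF z) (ae_of_all _ fun x => lkF_bound hC z x)
  have iF' : ∀ z, Integrable (lkF' h z) U := fun z =>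
    (hsq.const_mul (|z| + C)).mono' (mF' z) (ae_of_all _ fun x => lkF'_bound hC z x)
  have d1 : ∀ z, HasDerivAt (fun z => ∫ x, lkF h z x ∂U) (∫ x, lkF' h z x ∂U) z := fun z =>
    (hasDerivAt_integral_of_dominated_loc_of_deriv_le (Metric.ball_mem_nhds z zero_lt_one)
      (Eventually.of_forall mF) (iF z) (mF' z)
      (bound := fun x => (|z| + 1 + C) * x ^ 2)
      (ae_of_all _ fun x w hw => (lkF'_bound hC w x).trans (by
        have h1 : |w - z| < 1 := by simpa [Real.dist_eq] using hw
        have : |w| ≤ |z| + 1 := by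
          have := abs_sub_abs_le_abs_sub w z
          linarith
        gcongr)) (hsq.const_mul _)
      (ae_of_all _ fun x w _ => lkF_deriv h w x)).2
  have d2 : ∀ z, HasDerivAt (fun z => ∫ x, lkF' h z x ∂U) (∫ x, lkF'' z x ∂U) z := fun z =>
    (hasDerivAt_integral_of_dominated_loc_of_deriv_le (Metric.ball_mem_nhds z zero_lt_one)
      (Eventually.of_forall mF') (iF' z) (mF'' z)
      (bound := fun x => x ^ 2)
      (ae_of_all _ fun x w hw => by
        unfold lkF''
        rw [norm_neg, norm_mul, Complex.norm_exp]
        simp) hsq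
      (ae_of_all _ fun x w _ => lkF'_deriv h w x)).2
  have hid : ∀ z : ℝ, HasDerivAt (fun z : ℝ => (z : ℂ)) 1 z := fun z =>
    (hasDerivAt_id z).ofReal_comp.congr_deriv (by simp)
  have e1 : deriv ψ = fun z : ℝ => Complex.I * (γ : ℂ) - (σ : ℂ) ^ 2 * (z : ℂ) +
      ∫ x, lkF' h z x ∂U := by
    ext z
    have hfun : ψ = fun z : ℝ => Complex.I * (γ : ℂ) * (z : ℂ) - (σ : ℂ) ^ 2 * (z : ℂ) ^ 2 / 2 +
      ∫ x, lkF h z x ∂U := funext hψ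
    rw [hfun]
    have := ((((hid z).const_mul (Complex.I * (γ : ℂ))).sub
      ((((hid z).pow 2).const_mul ((σ : ℂ) ^ 2)).div_const 2)).add (d1 z)).deriv
    refine Eq.trans this ?_
    simp; ring
  rw [e1]
  refine Eq.trans ((((hid z).const_mul ((σ : ℂ) ^ 2)).const_sub
    (Complex.I * (γ : ℂ))).add (d2 z)).deriv ?_
  simp

theorem statement3
    (U : Measure ℝ) (hU0 : U {0} = 0)
    (hUfin : ∫⁻ x, ENNReal.ofReal (min 1 (x ^ 2)) ∂U < ⊤)
    (h : ℝ → ℝ) (hmeas : Measurable h)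
    (hbdd : ∃ C, ∀ x, |h x| ≤ C)
    (hsmall : (fun x => h x - 1) =o[nhds (0 : ℝ)] fun x => x)
    (hlarge : h =O[Filter.cocompact ℝ] fun x => x⁻¹)
    (hxh : ∃ C, ∀ x, |x * h x| ≤ C)
    (γ σ : ℝ) (hσ : 0 ≤ σ)
    (ψ : ℝ → ℂ)
    (hψ : ∀ z : ℝ, ψ z = Complex.I * (γ : ℂ) * (z : ℂ) - (σ : ℂ) ^ 2 * (z : ℂ) ^ 2 / 2 +
      ∫ x, (Complex.exp (Complex.I * (z : ℂ) * (x : ℂ)) - 1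
        - Complex.I * (z : ℂ) * (x : ℂ) * (h x : ℂ)) ∂U)
    (hU2 : ∫⁻ x in {x : ℝ | 1 < |x|}, ENNReal.ofReal (x ^ 2) ∂U < ⊤)
    (a b : ℝ) (hab : a < b) (ha : U {a} = 0) (hb : U {b} = 0) :
    ∃ L : ℂ,
      Filter.Tendsto
        (fun R : ℝ => ∫ z in (-R)..R,
          (deriv (deriv ψ) z + (σ : ℂ) ^ 2) *
            ∫ x in a..b, Complex.exp (-(Complex.I * (z : ℂ) * (x : ℂ))))
        Filter.atTop (nhds L) ∧
      ((∫ x in Set.Icc a b, x ^ 2 ∂U : ℝ) : ℂ) = -(1 / (2 * (Real.pi : ℂ))) * L := by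
  have hfin := sq_integrable U hUfin hU2
  have hsq : Integrable (fun x : ℝ => x ^ 2) U :=
    (lintegral_ofReal_ne_top_iff_integrable (by fun_prop)
      (ae_of_all _ fun x => sq_nonneg x)).mp hfin.ne
  obtain ⟨C, hC0, hC⟩ := trunc_bound h hsmall hxh
  have hd := psi_deriv2 U hsq h hmeas hC0 hC γ σ ψ hψ
  have hm : Measurable fun x : ℝ => ENNReal.ofReal (x ^ 2) := by fun_prop
  let ν : Measure ℝ := U.withDensity fun x : ℝ => ENNReal.ofReal (x ^ 2)
  haveI : IsFiniteMeasure ν := isFiniteMeasure_withDensity hfin.ne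
  have hac : ν ≪ U := withDensity_absolutelyContinuous _ _
  have hlt : ∀ᵐ x ∂U, ENNReal.ofReal (x ^ 2) < ⊤ := ae_of_all _ fun x => ENNReal.ofReal_lt_top
  have key : ∀ z : ℝ, deriv (deriv ψ) z + (σ : ℂ) ^ 2 =
      -∫ x, Complex.exp (Complex.I * z * x) ∂ν := by
    intro z
    rw [hd, integral_withDensity_eq_integral_toReal_smul hm hlt, ← integral_neg]
    have : ∀ x : ℝ, lkF'' z x =
        -((ENNReal.ofReal (x ^ 2)).toReal • Complex.exp (Complex.I * z * x)) := by
      intro x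
      rw [ENNReal.toReal_ofReal (sq_nonneg x), Complex.real_smul]
      simp [lkF'']
    simp_rw [this]
    ring
  have hT := (inversion ν a b hab (hac ha) (hac hb)).neg
  refine ⟨_, hT.congr fun R => ?_, ?_⟩
  · simp_rw [key, neg_mul]
    rw [intervalIntegral.integral_neg]
  · have hr : ν.real (Set.Icc a b) = ∫ x in Set.Icc a b, x ^ 2 ∂U := by
      rw [integral_eq_lintegral_of_nonneg_ae (ae_of_all _ fun x => sq_nonneg x) (by fun_prop)]
      rw [Measure.real, withDensity_apply _ measurableSet_Icc]
    rw [hr]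
    have : (Real.pi : ℂ) ≠ 0 := by exact_mod_cast Real.pi_ne_zero
    push_cast
    field_simp
end

section
/- (Example: negative binomial distribution.) Let c > 0, p ∈ (0, 1), q = 1 − p, and ψ(z) = c·log p − c·log(1 − q e^{iz}) (principal branch of the logarithm). Then for every z ∈ ℝ, ρ̂(z) = ∫_{−1}^{1} (ψ(z) − ψ(z+λ)) dλ = 2c ∑_{k=1}^{∞} (q^k (k − sin k)/k²) e^{ikz}. -/
open MeasureTheory

/-- **negative binomial distribution.** For `c > 0`, `p ∈ (0,1)`,
`q = 1 − p`, and `ψ(z) = c·log p − c·log(1 − q e^{iz})` (principal branch),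
`ρ̂(z) = ∫_{−1}^{1} (ψ(z) − ψ(z+λ)) dλ = 2c ∑_{k=1}^{∞} (q^k (k − sin k)/k²) e^{ikz}`. -/
theorem statement11 (c p q : ℝ) (hc : 0 < c) (hp0 : 0 < p) (hp1 : p < 1) (hq : q = 1 - p)
    (ψ : ℝ → ℂ)
    (hψ : ∀ z : ℝ, ψ z = (c : ℂ) * (Real.log p : ℂ)
      - (c : ℂ) * Complex.log (1 - (q : ℂ) * Complex.exp (Complex.I * (z : ℂ)))) :
    ∀ z : ℝ, (∫ t in (-1 : ℝ)..1, (ψ z - ψ (z + t)))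
      = 2 * (c : ℂ) * ∑' k : ℕ+,
          ((q : ℂ) ^ (k : ℕ) * ((((k : ℕ) : ℝ) - Real.sin ((k : ℕ) : ℝ) : ℝ) : ℂ)
            / ((k : ℕ) : ℂ) ^ 2) *
          Complex.exp (Complex.I * ((k : ℕ) : ℂ) * (z : ℂ)) := by
  intro z
  have hq0 : 0 < q := by linarith
  have hq1 : q < 1 := by linarith
  have hn : ∀ x : ℝ, ‖(q : ℂ) * Complex.exp (Complex.I * (x : ℂ))‖ = q := by
    intro x
    rw [norm_mul, mul_comm Complex.I, Complex.norm_exp_ofReal_mul_I, Complex.norm_real,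
      Real.norm_of_nonneg hq0.le, mul_one]
  have hs : ∀ x : ℝ, HasSum (fun n : ℕ ↦ ((q : ℂ) * Complex.exp (Complex.I * (x : ℂ))) ^ n / n)
      (-Complex.log (1 - (q : ℂ) * Complex.exp (Complex.I * (x : ℂ)))) := fun x =>
    Complex.hasSum_taylorSeries_neg_log (by rw [hn]; exact hq1)
  have hb : ∀ (n : ℕ) (x : ℝ),
      ‖((q : ℂ) * Complex.exp (Complex.I * (x : ℂ))) ^ n / n‖ ≤ q ^ n := by
    intro n x
    rw [norm_div, norm_pow, hn, Complex.norm_natCast]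
    rcases Nat.eq_zero_or_pos n with rfl | h
    · simp
    · exact div_le_self (by positivity) (by exact_mod_cast h)
  have key := intervalIntegral.hasSum_integral_of_dominated_convergence (μ := volume)
    (a := -1) (b := 1)
    (F := fun (n : ℕ) (t : ℝ) => (c : ℂ) *
      (((q : ℂ) * Complex.exp (Complex.I * (z : ℂ))) ^ n / n -
       ((q : ℂ) * Complex.exp (Complex.I * ((z + t : ℝ) : ℂ))) ^ n / n))
    (f := fun t => ψ z - ψ (z + t))
    (fun n _ => c * (q ^ n + q ^ n))
    (fun n => by
      apply Continuous.aestronglyMeasurable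
      fun_prop)
    (fun n => by
      refine Filter.Eventually.of_forall fun t _ => ?_
      rw [norm_mul, Complex.norm_real, Real.norm_of_nonneg hc.le]
      exact mul_le_mul_of_nonneg_left ((norm_sub_le _ _).trans (add_le_add (hb _ _) (hb _ _)))
        hc.le)
    (by
      refine Filter.Eventually.of_forall fun t _ => ?_
      have := summable_geometric_of_lt_one hq0.le hq1
      exact (this.add this).mul_left c)
    (by simp)
    (by
      refine Filter.Eventually.of_forall fun t _ => ?_
      have := ((hs z).sub (hs (z + t))).mul_left (c : ℂ)
      have e : ψ z - ψ (z + t) =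
          c * (-Complex.log (1 - (q : ℂ) * Complex.exp (Complex.I * (z : ℂ))) -
            -Complex.log (1 - (q : ℂ) * Complex.exp (Complex.I * ((z + t : ℝ) : ℂ)))) := by
        rw [hψ z, hψ (z + t)]; ring
      rw [e]
      exact this)
  rw [← key.tsum_eq, ← tsum_mul_left]
  rw [← PNat.coe_injective.tsum_eq (by
    intro n hn0
    rcases Nat.eq_zero_or_pos n with rfl | h
    · simp at hn0
    · exact ⟨⟨n, h⟩, rfl⟩)]
  refine tsum_congr fun k => ?_
  have hk : ((k : ℕ) : ℂ) ≠ 0 := by exact_mod_cast k.ne_zero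
  generalize (k : ℕ) = n at hk
  have e1 : ∀ t : ℝ, (c : ℂ) *
      (((q : ℂ) * Complex.exp (Complex.I * (z : ℂ))) ^ n / n -
       ((q : ℂ) * Complex.exp (Complex.I * ((z + t : ℝ) : ℂ))) ^ n / n) =
      (c * (q : ℂ) ^ n * Complex.exp (Complex.I * n * z) / n) *
        (1 - Complex.exp ((Complex.I * n) * t)) := by
    intro t
    rw [mul_pow, mul_pow, ← Complex.exp_nat_mul, ← Complex.exp_nat_mul]
    have : (n : ℂ) * (Complex.I * ((z + t : ℝ) : ℂ)) = Complex.I * n * z + Complex.I * n * t := by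
      push_cast; ring
    rw [this, Complex.exp_add, show (n : ℂ) * (Complex.I * z) = Complex.I * n * z by ring]
    ring
  simp_rw [e1]
  have hI : Complex.I * n ≠ 0 := mul_ne_zero Complex.I_ne_zero hk
  rw [intervalIntegral.integral_const_mul, intervalIntegral.integral_sub (by simp)
    (Continuous.intervalIntegrable (by fun_prop) _ _), integral_exp_mul_complex hI]
  have e2 : Complex.exp (Complex.I * n * (1 : ℝ)) - Complex.exp (Complex.I * n * (-1 : ℝ))
      = 2 * Complex.I * Complex.sin n := by
    rw [Complex.sin]
    push_cast
    rw [show Complex.I * n * 1 = n * Complex.I by ring,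
      show Complex.I * n * (-1) = -n * Complex.I by ring]
    linear_combination (-(Complex.exp (-n * Complex.I) - Complex.exp (n * Complex.I))) * Complex.I_sq
  rw [e2]
  have hI0 := Complex.I_ne_zero
  simp only [intervalIntegral.integral_const]
  push_cast
  norm_num
  field_simp
  try ring
end

section
/- (Hyperbolic cosine, convolution identity.) Let f(x) = 1/(π·cosh x). Then for every x ≠ 0, the convolution (f ∗ f)(x) = ∫_ℝ f(x − y) f(y) dy equals (4/π²) · x/(e^x − e^{−x}). -/
open MeasureTheory

lemma aux_top (x : ℝ) : Filter.Tendsto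
    (fun y : ℝ => Real.log (Real.cosh y) - Real.log (Real.cosh (x - y)))
    Filter.atTop (nhds x) := by
  have he : Filter.Tendsto (fun y : ℝ => Real.exp (-(2 * y))) Filter.atTop (nhds 0) :=
    Real.tendsto_exp_neg_atTop_nhds_zero.comp
      (Filter.tendsto_id.const_mul_atTop (by norm_num : (0:ℝ) < 2))
  have h1 : Filter.Tendsto (fun y : ℝ => (1 + Real.exp (-(2 * y))) /
      (Real.exp (-x) + Real.exp x * Real.exp (-(2 * y)))) Filter.atTop
      (nhds ((1 + 0) / (Real.exp (-x) + Real.exp x * 0))) := by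
    refine (he.const_add 1).div ((he.const_mul _).const_add _) ?_
    have := Real.exp_pos (-x)
    simp
  have h2 := h1.log (by simp)
  have h3 : Real.log ((1 + 0) / (Real.exp (-x) + Real.exp x * 0)) = x := by simp
  rw [h3] at h2
  refine h2.congr fun y => ?_
  rw [← Real.log_div (Real.cosh_pos _).ne' (Real.cosh_pos _).ne']
  congr 1
  rw [Real.cosh_eq, Real.cosh_eq]
  have e1 : Real.exp (-(2 * y)) = Real.exp (-y) * Real.exp (-y) := by
    rw [← Real.exp_add]; ring_nf
  have e2 : Real.exp (x - y) = Real.exp x * Real.exp (-y) := by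
    rw [← Real.exp_add]; ring_nf
  have e3 : Real.exp (-(x - y)) = Real.exp (-x) * Real.exp y := by
    rw [← Real.exp_add]; ring_nf
  have e4 : Real.exp y * Real.exp (-y) = 1 := by
    rw [← Real.exp_add]; simp
  rw [e1, e2, e3]
  have p1 := Real.exp_pos x
  have p2 := Real.exp_pos (-x)
  have p3 := Real.exp_pos y
  have p4 := Real.exp_pos (-y)
  rw [div_eq_div_iff (by positivity) (by positivity)]
  generalize Real.exp y = a at *
  generalize Real.exp (-y) = b at *
  generalize Real.exp x = c at *
  generalize Real.exp (-x) = d at *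
  linear_combination ((b * d - b * c) / 2) * e4

lemma aux_bot (x : ℝ) : Filter.Tendsto
    (fun y : ℝ => Real.log (Real.cosh y) - Real.log (Real.cosh (x - y)))
    Filter.atBot (nhds (-x)) := by
  refine ((aux_top (-x)).comp Filter.tendsto_neg_atBot_atTop).congr fun y => ?_
  simp only [Function.comp]
  rw [Real.cosh_neg, ← Real.cosh_neg (-x - -y)]
  ring_nf

/-- **hyperbolic cosine, convolution identity.** For `f(x) = 1/(π cosh x)`
and every `x ≠ 0`, `(f ∗ f)(x) = ∫_ℝ f(x − y) f(y) dy = (4/π²) · x/(e^x − e^{−x})`. -/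
theorem statement13 (f : ℝ → ℝ) (hf : ∀ x : ℝ, f x = 1 / (Real.pi * Real.cosh x)) :
    ∀ x : ℝ, x ≠ 0 →
      (∫ y : ℝ, f (x - y) * f y)
        = 4 / Real.pi ^ 2 * (x / (Real.exp x - Real.exp (-x))) := by
  intro x hx
  have hs : Real.sinh x ≠ 0 := by simpa using hx
  have hd : ∀ y, HasDerivAt (fun y : ℝ => (Real.log (Real.cosh y) -
      Real.log (Real.cosh (x - y))) / Real.sinh x)
      (1 / (Real.cosh (x - y) * Real.cosh y)) y := by
    intro y
    have c1 := (Real.cosh_pos y).ne'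
    have c2 := (Real.cosh_pos (x - y)).ne'
    have h1 := (Real.hasDerivAt_cosh y).log c1
    have h2 := (((hasDerivAt_id y).const_sub x).cosh).log c2
    refine ((h1.sub h2).div_const (Real.sinh x)).congr_deriv ?_
    have : Real.sinh x = Real.sinh (x - y) * Real.cosh y + Real.cosh (x - y) * Real.sinh y := by
      rw [← Real.sinh_add]; ring_nf
    simp only [id]
    field_simp
    rw [this]; ring
  have ht := (aux_top x).div_const (Real.sinh x)
  have hb := (aux_bot x).div_const (Real.sinh x)
  have hc : Continuous (fun y : ℝ => 1 / (Real.cosh (x - y) * Real.cosh y)) := by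
    refine continuous_const.div (by fun_prop) fun y => ?_
    have c1 := (Real.cosh_pos y)
    have c2 := (Real.cosh_pos (x - y))
    positivity
  have hi : Integrable (fun y : ℝ => 1 / (Real.cosh (x - y) * Real.cosh y)) := by
    refine integrable_of_intervalIntegral_norm_tendsto (l := Filter.atTop) (a := fun i : ℝ => -i)
      (b := fun i : ℝ => i) (x / Real.sinh x - -x / Real.sinh x)
      (fun i => (hc.integrableOn_Icc).mono_set Set.Ioc_subset_Icc_self)
      Filter.tendsto_neg_atTop_atBot Filter.tendsto_id ?_
    refine (ht.sub (hb.comp Filter.tendsto_neg_atTop_atBot)).congr fun i => ?_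
    have hn : ∀ y : ℝ, ‖1 / (Real.cosh (x - y) * Real.cosh y)‖
        = 1 / (Real.cosh (x - y) * Real.cosh y) := by
      intro y
      have c1 := (Real.cosh_pos y)
      have c2 := (Real.cosh_pos (x - y))
      exact Real.norm_of_nonneg (by positivity)
    simp only [hn]
    rw [intervalIntegral.integral_eq_sub_of_hasDerivAt (fun y _ => hd y)
      (hc.intervalIntegrable _ _)]
    rfl
  have hI := integral_of_hasDerivAt_of_tendsto hd hi hb ht
  have hfe : (fun y : ℝ => f (x - y) * f y) =
      fun y => (1 / Real.pi ^ 2) * (1 / (Real.cosh (x - y) * Real.cosh y)) := by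
    funext y
    have c1 := (Real.cosh_pos y).ne'
    have c2 := (Real.cosh_pos (x - y)).ne'
    rw [hf, hf]; field_simp
  rw [hfe, integral_const_mul, hI]
  rw [Real.sinh_eq] at hs ⊢
  have hs' : Real.exp x - Real.exp (-x) ≠ 0 := fun h => hs (by rw [h]; simp)
  field_simp
  ring
end

section
/- (Hyperbolic cosine, Fourier transform identity.) For every z ∈ ℝ, ∫_ℝ e^{izx} · x/(e^x − e^{−x}) dx = (π²/4) · (1/cosh(πz/2))², where the integrand is given its continuous value 1/2 at x = 0. -/
open MeasureTheory Set Filter Topology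

lemma aux_deriv (a : ℂ) (ha : a ≠ 0) (x : ℝ) :
    HasDerivAt (fun x : ℝ => -((x : ℂ) / a + 1 / a ^ 2) * Complex.exp (-(a * x)))
      ((x : ℂ) * Complex.exp (-(a * x))) x := by
  have h1 : HasDerivAt (fun x : ℂ => -((x : ℂ) / a + 1 / a ^ 2) * Complex.exp (-(a * x)))
      ((x : ℂ) * Complex.exp (-(a * x))) (x : ℂ) := by
    have h2 : HasDerivAt (fun x : ℂ => -(x / a + 1 / a ^ 2)) (-(1 / a)) (x : ℂ) :=
      (((hasDerivAt_id (x : ℂ)).div_const a).add_const _).neg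
    have h3 : HasDerivAt (fun x : ℂ => Complex.exp (-(a * x)))
        (Complex.exp (-(a * x)) * (-(a * 1))) (x : ℂ) :=
      (((hasDerivAt_id (x : ℂ)).const_mul a).neg).cexp
    convert! h2.mul h3 using 1
    field_simp
    ring
  exact h1.comp_ofReal

lemma aux_norm (a : ℂ) (x : ℝ) : ‖Complex.exp (-(a * x))‖ = Real.exp (-(a.re * x)) := by
  rw [Complex.norm_exp]; simp

lemma aux_tend (r : ℝ) (hr : 0 < r) (n : ℕ) :
    Tendsto (fun x : ℝ => x ^ n * Real.exp (-(r * x))) atTop (𝓝 0) := by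
  have h := (Real.tendsto_pow_mul_exp_neg_atTop_nhds_zero n).comp
    (tendsto_id.const_mul_atTop hr)
  have h2 := h.const_mul ((r ^ n)⁻¹)
  rw [mul_zero] at h2
  refine h2.congr fun x => ?_
  have : r ^ n ≠ 0 := by positivity
  simp only [Function.comp, id, mul_pow]
  field_simp

lemma aux_tendC (a : ℂ) (ha : 0 < a.re) :
    Tendsto (fun x : ℝ => -((x : ℂ) / a + 1 / a ^ 2) * Complex.exp (-(a * x))) atTop (𝓝 0) := by
  have h0 : Tendsto (fun x : ℝ => Complex.exp (-(a * x))) atTop (𝓝 0) := by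
    rw [tendsto_zero_iff_norm_tendsto_zero]
    simpa [aux_norm] using aux_tend a.re ha 0
  have h1 : Tendsto (fun x : ℝ => (x : ℂ) * Complex.exp (-(a * x))) atTop (𝓝 0) := by
    rw [tendsto_zero_iff_norm_tendsto_zero]
    have := (aux_tend a.re ha 1).norm
    simpa [aux_norm] using this
  have h2 := (h1.const_mul (-(1 / a))).add (h0.const_mul (-(1 / a ^ 2)))
  simp only [mul_zero, add_zero] at h2
  refine h2.congr fun x => ?_
  ring

lemma aux_intR (r : ℝ) (hr : 0 < r) :
    IntegrableOn (fun x : ℝ => x * Real.exp (-(r * x))) (Ioi 0) := by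
  have := integrableOn_rpow_mul_exp_neg_mul_rpow (p := 1) (s := 1) (b := r)
    (by norm_num) (by norm_num) hr
  simpa using this

lemma aux_int (a : ℂ) (ha : 0 < a.re) :
    IntegrableOn (fun x : ℝ => (x : ℂ) * Complex.exp (-(a * x))) (Ioi 0) := by
  refine Integrable.mono' (aux_intR a.re ha) ?_ ?_
  · exact Continuous.aestronglyMeasurable (by fun_prop)
  · filter_upwards [ae_restrict_mem measurableSet_Ioi] with x hx
    rw [norm_mul, aux_norm, Complex.norm_real, Real.norm_of_nonneg (le_of_lt hx)]

lemma aux_val (a : ℂ) (ha : 0 < a.re) :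
    ∫ x in Ioi (0 : ℝ), (x : ℂ) * Complex.exp (-(a * x)) = 1 / a ^ 2 := by
  have ha0 : a ≠ 0 := by rintro rfl; simp at ha
  rw [integral_Ioi_of_hasDerivAt_of_tendsto' (fun x _ => aux_deriv a ha0 x) (aux_int a ha)
    (aux_tendC a ha)]
  simp

lemma aux_valR (r : ℝ) (hr : 0 < r) :
    ∫ x in Ioi (0 : ℝ), x * Real.exp (-(r * x)) = 1 / r ^ 2 := by
  have h := aux_val r (by simpa using hr)
  apply Complex.ofReal_injective
  rw [← integral_complex_ofReal]
  push_cast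
  exact h

lemma aux_summ : Summable fun n : ℕ => 1 / (2 * (n : ℝ) + 1) ^ 2 := by
  have h := (Real.summable_one_div_nat_pow (p := 2)).2 (by norm_num)
  have h2 := h.comp_injective (i := fun n : ℕ => 2 * n + 1) (fun a b h => by simpa using h)
  refine h2.congr fun n => ?_
  simp

/-- the kernel -/
lemma aux_ker (x : ℝ) (hx : 0 < x) :
    HasSum (fun n : ℕ => x * Real.exp (-((2 * (n : ℝ) + 1) * x)))
      (x / (Real.exp x - Real.exp (-x))) := by
  have h1 : Real.exp (-(2 * x)) < 1 := by rw [Real.exp_lt_one_iff]; linarith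
  have h := (hasSum_geometric_of_lt_one (Real.exp_nonneg _) h1).mul_left (x * Real.exp (-x))
  convert! h using 1
  · funext n
    rw [← Real.exp_nat_mul, mul_assoc, ← Real.exp_add]; ring_nf
  · have e : Real.exp x - Real.exp (-x) = Real.exp x * (1 - Real.exp (-(2 * x))) := by
      rw [mul_sub, ← Real.exp_add]; ring_nf
    have : 1 - Real.exp (-(2 * x)) ≠ 0 := by linarith
    rw [e, Real.exp_neg x]
    field_simp

lemma aux_half (z : ℝ) :
    HasSum (fun n : ℕ => 1 / (2 * (n : ℂ) + 1 - Complex.I * z) ^ 2)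
      (∫ x in Ioi (0 : ℝ), Complex.exp (Complex.I * (z : ℂ) * (x : ℂ)) *
          ((if x = 0 then 1 / 2 else x / (Real.exp x - Real.exp (-x)) : ℝ) : ℂ)) := by
  have hre : ∀ n : ℕ, (2 * (n : ℂ) + 1 - Complex.I * z).re = 2 * (n : ℝ) + 1 := by
    intro n; simp
  have hpos : ∀ n : ℕ, (0 : ℝ) < 2 * (n : ℝ) + 1 := fun n => by positivity
  have h := hasSum_integral_of_summable_integral_norm (μ := volume.restrict (Ioi (0 : ℝ)))
    (F := fun (n : ℕ) (x : ℝ) => (x : ℂ) * Complex.exp (-((2 * (n : ℂ) + 1 - Complex.I * z) * x)))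
    (fun n => aux_int _ (by rw [hre]; exact hpos n)) (by
      refine aux_summ.congr fun n => ?_
      rw [← aux_valR _ (hpos n)]
      refine setIntegral_congr_fun measurableSet_Ioi fun x hx => ?_
      rw [norm_mul, aux_norm, hre, Complex.norm_real, Real.norm_of_nonneg (le_of_lt hx)])
  convert! h using 1
  · funext n
    rw [aux_val _ (by rw [hre]; exact hpos n)]
  · refine setIntegral_congr_fun measurableSet_Ioi fun x hx => ?_
    have hx' : (0 : ℝ) < x := hx
    simp only [hx'.ne', if_false]
    have h2 := ((Complex.hasSum_ofReal.2 (aux_ker x hx')).mul_left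
      (Complex.exp (Complex.I * z * x)))
    rw [← h2.tsum_eq]
    congr 1
    funext n
    push_cast
    rw [mul_left_comm, ← Complex.exp_add]
    ring_nf

lemma aux_integ (z : ℝ) :
    IntegrableOn (fun x : ℝ => Complex.exp (Complex.I * (z : ℂ) * (x : ℂ)) *
          ((if x = 0 then 1 / 2 else x / (Real.exp x - Real.exp (-x)) : ℝ) : ℂ)) (Ioi 0) := by
  have hb : IntegrableOn (fun x : ℝ => Real.exp (-(1 * x)) + x * Real.exp (-(1 * x))) (Ioi 0) := by
    refine Integrable.add ?_ (aux_intR 1 one_pos)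
    have h0 := integrableOn_exp_mul_Ioi (a := -1) (by norm_num) 0
    simpa [IntegrableOn] using h0
  refine Integrable.mono' hb ?_ ?_
  · apply Measurable.aestronglyMeasurable
    apply Measurable.mul
    · fun_prop
    · apply Complex.measurable_ofReal.comp
      apply Measurable.ite (measurableSet_singleton 0) <;> fun_prop
  · filter_upwards [ae_restrict_mem measurableSet_Ioi] with x hx
    have hx' : (0 : ℝ) < x := hx
    have e1 : ‖Complex.exp (Complex.I * z * x)‖ = 1 := by
      rw [Complex.norm_exp]; simp
    have hlt : 0 < Real.exp x - Real.exp (-x) := by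
      have : Real.exp (-x) < Real.exp x := Real.exp_lt_exp.2 (by linarith)
      linarith
    simp only [hx'.ne', if_false]
    rw [norm_mul, e1, one_mul, Complex.norm_real, Real.norm_of_nonneg (by positivity),
      div_le_iff₀ hlt, one_mul]
    have e2 : Real.exp (-x) * Real.exp x = 1 := by rw [← Real.exp_add]; simp
    have e3 : (Real.exp (-x) + x * Real.exp (-x)) * (Real.exp x - Real.exp (-x))
        = (1 + x) * (1 - Real.exp (-x) * Real.exp (-x)) := by
      linear_combination (1 + x) * e2
    rw [e3]
    have h4 : (1 + x) * Real.exp (-x) ≤ 1 := by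
      rw [← e2, mul_comm]
      gcongr
      linarith [Real.add_one_le_exp x]
    have h5 : Real.exp (-x) ≤ 1 := by rw [Real.exp_le_one_iff]; linarith
    nlinarith [Real.exp_pos (-x)]

lemma aux_full (z : ℝ) :
    HasSum (fun n : ℕ => 1 / (2 * (n : ℂ) + 1 - Complex.I * z) ^ 2
        + 1 / (2 * (n : ℂ) + 1 + Complex.I * z) ^ 2)
      (∫ x : ℝ, Complex.exp (Complex.I * (z : ℂ) * (x : ℂ)) *
          ((if x = 0 then 1 / 2 else x / (Real.exp x - Real.exp (-x)) : ℝ) : ℂ)) := by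
  set g : ℝ → ℝ → ℂ := fun z x => Complex.exp (Complex.I * (z : ℂ) * (x : ℂ)) *
          ((if x = 0 then 1 / 2 else x / (Real.exp x - Real.exp (-x)) : ℝ) : ℂ) with hg
  have hsymm : ∀ x, g z x = g (-z) (-x) := by
    intro x
    simp only [hg, neg_eq_zero, neg_neg]
    congr 2
    · push_cast; ring_nf
    · split_ifs
      · rfl
      · rw [← neg_sub (Real.exp x), neg_div_neg_eq]
  have hI : IntegrableOn (g z) (Iic 0) := by
    have h1 : IntegrableOn (g (-z)) (Ici 0) := by
      rw [integrableOn_Ici_iff_integrableOn_Ioi]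
      exact aux_integ (-z)
    have h3 : IntegrableOn (fun x => g (-z) (-x)) (Iic 0) := by
      have := (Measure.measurePreserving_neg (volume : Measure ℝ)).integrableOn_comp_preimage
        (Homeomorph.neg ℝ).measurableEmbedding (f := g (-z)) (s := Ici 0)
      have := this.2 h1
      simpa [Function.comp_def] using this
    exact h3.congr_fun (fun x _ => (hsymm x).symm) measurableSet_Iic
  have hsum : ∫ x, g z x = (∫ x in Ioi 0, g z x) + ∫ x in Ioi 0, g (-z) x := by
    rw [← intervalIntegral.integral_Iic_add_Ioi hI (aux_integ z), add_comm]
    congr 1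
    have := integral_comp_neg_Iic 0 (g (-z))
    rw [neg_zero] at this
    rw [← this]
    exact setIntegral_congr_fun measurableSet_Iic fun x _ => hsymm x
  rw [hsum]
  have h2 := aux_half (-z)
  have := (aux_half z).add h2
  convert! this using 2
  · push_cast; ring_nf

lemma aux_cot (w : ℂ) (hw : 0 < w.im) :
    ∑' n : ℤ, 1 / (w + n) ^ 2 = Real.pi ^ 2 / Complex.sin (Real.pi * w) ^ 2 := by
  have h := iteratedDerivWithin_cot_pi_mul_eq_mul_tsum_div_pow (k := 1) le_rfl (z := w) hw
  rw [iteratedDerivWithin_one,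
    derivWithin_of_isOpen UpperHalfPlane.isOpen_upperHalfPlaneSet hw] at h
  have hs : Complex.sin (Real.pi * w) ≠ 0 :=
    sin_pi_mul_ne_zero (UpperHalfPlane.coe_mem_integerComplement ⟨w, hw⟩)
  have hl : HasDerivAt (fun x : ℂ => (Real.pi : ℂ) * x) ((Real.pi : ℂ) * 1) w :=
    (hasDerivAt_id w).const_mul _
  have hd := ((hl.ccos).div (hl.csin) hs).const_mul (Real.pi : ℂ)
  have e : (fun x : ℂ => (Real.pi : ℂ) * Complex.cot (Real.pi * x)) =
    fun x => (Real.pi : ℂ) * ((fun x => Complex.cos (Real.pi * x)) / (fun x => Complex.sin (Real.pi * x))) x := by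
    funext x; simp [Complex.cot]
  rw [e, hd.deriv] at h
  norm_num at h
  simp only [one_div]
  rw [eq_comm, neg_eq_iff_eq_neg] at h
  rw [h]
  field_simp
  linear_combination (Complex.sin_sq_add_cos_sq (Real.pi * w))

lemma aux_neg (z : ℝ) (hz : z < 0) :
    HasSum (fun n : ℕ => 1 / (2 * (n : ℂ) + 1 - Complex.I * z) ^ 2
        + 1 / (2 * (n : ℂ) + 1 + Complex.I * z) ^ 2)
      ((Real.pi ^ 2 / 4 * (1 / Real.cosh (Real.pi * z / 2)) ^ 2 : ℝ) : ℂ) := by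
  have hw : 0 < ((1 - Complex.I * z) / 2 : ℂ).im := by simp; linarith
  have h := aux_cot _ hw
  have hs : Summable fun n : ℤ => 1 / ((1 - Complex.I * z) / 2 + (n : ℂ)) ^ 2 := by
    have := EisensteinSeries.linear_right_summable ((1 - Complex.I * z) / 2) 1 (k := 2) le_rfl
    simpa using this
  have h2 := (hs.hasSum.nat_add_neg_add_one).mul_left (1 / 4)
  rw [h] at h2
  convert! h2 using 1
  · funext n
    have e1 : ((1 - Complex.I * z) / 2 + ((n : ℤ) : ℂ)) = (2 * (n : ℂ) + 1 - Complex.I * z) / 2 := by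
      push_cast; ring
    have e2 : ((1 - Complex.I * z) / 2 + ((-((n : ℤ) + 1) : ℤ) : ℂ)) = -(2 * (n : ℂ) + 1 + Complex.I * z) / 2 := by
      push_cast; ring
    rw [e1, e2, div_pow, div_pow, neg_sq, one_div_div, one_div_div]
    ring
  · have : Complex.sin (Real.pi * ((1 - Complex.I * z) / 2)) = Complex.cosh (Real.pi * z / 2) := by
      rw [← Complex.cos_mul_I, ← Complex.sin_pi_div_two_sub]
      ring_nf
    rw [this]
    push_cast
    ring

lemma aux_zero :
    HasSum (fun n : ℕ => 1 / (2 * (n : ℝ) + 1) ^ 2) (Real.pi ^ 2 / 8) := by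
  have h := hasSum_zeta_two
  have he : HasSum (fun n : ℕ => 1 / (((2 * n : ℕ) : ℝ)) ^ 2) (Real.pi ^ 2 / 24) := by
    convert! h.mul_left (1 / 4) using 1
    · funext n; push_cast; rw [mul_pow, one_div, mul_inv]; ring
    · ring
  have ho : Summable fun n : ℕ => 1 / (((2 * n + 1 : ℕ) : ℝ)) ^ 2 := by
    simpa using aux_summ
  have h3 := (HasSum.even_add_odd (f := fun n : ℕ => 1 / (n : ℝ) ^ 2) he ho.hasSum).unique h
  have h4 : ∑' n : ℕ, 1 / (((2 * n + 1 : ℕ) : ℝ)) ^ 2 = Real.pi ^ 2 / 8 := by linarith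
  have h5 := ho.hasSum
  rw [h4] at h5
  simpa using h5

lemma aux_all (z : ℝ) :
    HasSum (fun n : ℕ => 1 / (2 * (n : ℂ) + 1 - Complex.I * z) ^ 2
        + 1 / (2 * (n : ℂ) + 1 + Complex.I * z) ^ 2)
      ((Real.pi ^ 2 / 4 * (1 / Real.cosh (Real.pi * z / 2)) ^ 2 : ℝ) : ℂ) := by
  rcases lt_trichotomy z 0 with hz | rfl | hz
  · exact aux_neg z hz
  · have h := Complex.hasSum_ofReal.2 (aux_zero.add aux_zero)
    convert! h using 1
    · funext n; push_cast; simp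
    · congr 1; simp; ring
  · have h := aux_neg (-z) (by linarith)
    convert! h using 1
    · funext n; push_cast; rw [add_comm]; ring_nf
    · rw [mul_neg, neg_div, Real.cosh_neg]

theorem statement14 :
    ∀ z : ℝ,
      (∫ x : ℝ, Complex.exp (Complex.I * (z : ℂ) * (x : ℂ)) *
          ((if x = 0 then 1 / 2 else x / (Real.exp x - Real.exp (-x)) : ℝ) : ℂ))
        = ((Real.pi ^ 2 / 4 * (1 / Real.cosh (Real.pi * z / 2)) ^ 2 : ℝ) : ℂ) := by
  intro z
  exact (aux_full z).unique (aux_all z)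
end

section
/- (Example: hyperbolic cosine distribution, Lévy density.) For every real x ≠ 0, (1/(2πx²)) · ∫_ℝ e^{−izx} · (π²/4) · (1/cosh(πz/2))² dz = 1/(x(e^x − e^{−x})). Equivalently, with ψ(z) = −log cosh(πz/2) (so that e^{ψ(z)} = 1/cosh(πz/2) is the characteristic function of the hyperbolic cosine distribution and ψ''(z) = −(π²/4)/cosh²(πz/2)), the formula u(x) = −(1/(2πx²)) ∫_ℝ e^{−izx} ψ''(z) dz yields u(x) = 1/(x(e^x − e^{−x})). -/
open MeasureTheory

lemma sig_deriv (z : ℝ) : Real.sigmoid (Real.pi * z) * (1 - Real.sigmoid (Real.pi * z)) * Real.pi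
    = Real.pi / 4 * (1 / Real.cosh (Real.pi * z / 2)) ^ 2 := by
  have hb := Real.exp_pos (-(Real.pi * z / 2))
  have h1 : Real.exp (-(Real.pi * z)) = Real.exp (-(Real.pi * z / 2)) ^ 2 := by
    rw [← Real.exp_nat_mul]; congr 1; push_cast; ring
  have h2 : Real.exp (Real.pi * z / 2) = (Real.exp (-(Real.pi * z / 2)))⁻¹ := by
    rw [Real.exp_neg, inv_inv]
  rw [Real.sigmoid_def, Real.cosh_eq, h1, h2]
  generalize Real.exp (-(Real.pi * z / 2)) = b at hb
  field_simp
  ring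

lemma pow_eq (z : ℝ) (s : ℂ) :
    ((Real.sigmoid (Real.pi * z) : ℝ) : ℂ) ^ ((1 - s) - 1) *
      (1 - ((Real.sigmoid (Real.pi * z) : ℝ) : ℂ)) ^ ((1 + s) - 1)
    = Complex.exp (-(s * Real.pi * z)) := by
  have hu := Real.sigmoid_pos (Real.pi * z)
  have h1 : 1 - Real.sigmoid (Real.pi * z)
      = Real.sigmoid (Real.pi * z) * Real.exp (-(Real.pi * z)) := by
    rw [Real.sigmoid_mul_rexp_neg, Real.sigmoid_neg]
  have h2 : (1 - ((Real.sigmoid (Real.pi * z) : ℝ) : ℂ))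
      = ((Real.sigmoid (Real.pi * z) * Real.exp (-(Real.pi * z)) : ℝ) : ℂ) := by
    rw [← h1]; push_cast; rfl
  have hp : 0 < Real.sigmoid (Real.pi * z) * Real.exp (-(Real.pi * z)) := by positivity
  rw [h2, Complex.cpow_def_of_ne_zero (by exact_mod_cast hu.ne'),
    Complex.cpow_def_of_ne_zero (by exact_mod_cast hp.ne'), ← Complex.ofReal_log hu.le,
    ← Complex.ofReal_log hp.le, Real.log_mul hu.ne' (Real.exp_pos _).ne', Real.log_exp,
    ← Complex.exp_add]
  congr 1
  push_cast
  ring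

lemma image_sig : (fun z : ℝ => Real.sigmoid (Real.pi * z)) '' Set.univ = Set.Ioo 0 1 := by
  rw [Set.image_univ, ← Real.range_sigmoid]
  exact (mul_left_surjective₀ Real.pi_ne_zero).range_comp Real.sigmoid

lemma beta_eq (s : ℂ) : Complex.betaIntegral (1 - s) (1 + s) =
    ∫ z : ℝ, Complex.exp (-(s * Real.pi * z)) *
      ((Real.pi / 4 * (1 / Real.cosh (Real.pi * z / 2)) ^ 2 : ℝ) : ℂ) := by
  rw [Complex.betaIntegral, intervalIntegral.integral_of_le zero_le_one,
    ← integral_Ioc_eq_integral_Ioo.symm, ← image_sig,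
    integral_image_eq_integral_abs_deriv_smul (f' := fun z =>
      Real.pi / 4 * (1 / Real.cosh (Real.pi * z / 2)) ^ 2) MeasurableSet.univ]
  · rw [setIntegral_univ]
    congr 1
    ext z
    rw [pow_eq, abs_of_nonneg (by positivity), Complex.real_smul, mul_comm]
  · intro z _
    rw [← sig_deriv]
    have h := (Real.hasDerivAt_sigmoid (Real.pi * z)).comp z
      ((hasDerivAt_id z).const_mul Real.pi)
    simp only [mul_one] at h
    exact h.hasDerivWithinAt
  · intro a _ b _ h
    exact mul_left_cancel₀ Real.pi_ne_zero (Real.sigmoid_injective h)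

lemma main_int (x : ℝ) (hx : x ≠ 0) :
    (1 / (2 * (Real.pi : ℂ) * (x : ℂ) ^ 2)) *
          (∫ z : ℝ, Complex.exp (-(Complex.I * (z : ℂ) * (x : ℂ))) *
            ((Real.pi ^ 2 / 4 * (1 / Real.cosh (Real.pi * z / 2)) ^ 2 : ℝ) : ℂ))
        = ((1 / (x * (Real.exp x - Real.exp (-x))) : ℝ) : ℂ) := by
  have hpi : (Real.pi : ℂ) ≠ 0 := by exact_mod_cast Real.pi_ne_zero
  have hxc : (x : ℂ) ≠ 0 := by exact_mod_cast hx
  set s : ℂ := Complex.I * x / Real.pi with hs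
  have hs0 : s ≠ 0 := by simp [hs, hx, hpi]
  have hsre : s.re = 0 := by
    have : s = ((x / Real.pi : ℝ) : ℂ) * Complex.I := by rw [hs]; push_cast; ring
    rw [this]; simp
  have h1 : (∫ z : ℝ, Complex.exp (-(Complex.I * (z : ℂ) * (x : ℂ))) *
      ((Real.pi ^ 2 / 4 * (1 / Real.cosh (Real.pi * z / 2)) ^ 2 : ℝ) : ℂ))
      = Real.pi * Complex.betaIntegral (1 - s) (1 + s) := by
    rw [beta_eq, ← integral_const_mul]
    congr 1
    ext z
    have : s * Real.pi * z = Complex.I * z * x := by rw [hs]; field_simp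
    rw [this]
    push_cast
    ring
  have h2 : Complex.betaIntegral (1 - s) (1 + s) = x / Complex.sinh x := by
    rw [Complex.betaIntegral_eq_Gamma_mul_div _ _ (by simp [hsre]) (by simp [hsre]),
      show (1 - s) + (1 + s) = ((1 : ℕ) : ℂ) + 1 by push_cast; ring, Complex.Gamma_nat_eq_factorial,
      add_comm 1 s, Complex.Gamma_add_one s hs0,
      show Complex.Gamma (1 - s) * (s * Complex.Gamma s)
        = s * (Complex.Gamma s * Complex.Gamma (1 - s)) by ring,
      Complex.Gamma_mul_Gamma_one_sub,
      show (Real.pi : ℂ) * s = x * Complex.I by rw [hs]; field_simp, Complex.sin_mul_I, hs]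
    have hI := Complex.I_ne_zero
    have hsh : Complex.sinh x ≠ 0 := by
      rw [← Complex.ofReal_sinh]
      exact_mod_cast (Real.sinh_ne_zero).2 hx
    simp
    field_simp
  rw [h1, h2]
  have hsh : Real.exp x - Real.exp (-x) = 2 * Real.sinh x := by rw [Real.sinh_eq]; ring
  rw [hsh]
  push_cast
  have hsh : Complex.sinh x ≠ 0 := by
    rw [← Complex.ofReal_sinh]
    exact_mod_cast (Real.sinh_ne_zero).2 hx
  field_simp

lemma deriv2 (ψ : ℝ → ℂ)
    (hψ : ∀ z : ℝ, ψ z = -Complex.log ((Real.cosh (Real.pi * z / 2) : ℝ) : ℂ)) (z : ℝ) :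
    deriv (deriv ψ) z
      = -((Real.pi ^ 2 / 4 * (1 / Real.cosh (Real.pi * z / 2)) ^ 2 : ℝ) : ℂ) := by
  have hl : ∀ z : ℝ, HasDerivAt (fun z : ℝ => Real.pi * z / 2) (Real.pi / 2) z := fun z => by
    simpa using ((hasDerivAt_id z).const_mul Real.pi).div_const 2
  have e : ψ = fun z : ℝ => ((-Real.log (Real.cosh (Real.pi * z / 2)) : ℝ) : ℂ) := by
    ext z
    rw [hψ, Complex.ofReal_neg, Complex.ofReal_log (Real.cosh_pos _).le]
  have e1 : deriv ψ = fun z : ℝ => ((-(Real.sinh (Real.pi * z / 2) * (Real.pi / 2) /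
      Real.cosh (Real.pi * z / 2)) : ℝ) : ℂ) := by
    ext z
    rw [e]
    exact (((hl z).cosh.log (Real.cosh_pos _).ne').neg.ofReal_comp).deriv
  rw [e1]
  have h := ((((hl z).sinh.mul_const (Real.pi / 2)).div (hl z).cosh
    (Real.cosh_pos _).ne').neg.ofReal_comp).deriv
  refine h.trans ?_
  rw [← Complex.ofReal_neg]
  congr 2
  have hc := (Real.cosh_pos (Real.pi * z / 2)).ne'
  have := Real.cosh_sq (Real.pi * z / 2)
  field_simp
  rw [this]
  ring

/-- **hyperbolic cosine distribution, Lévy density.** For every `x ≠ 0`,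
`(1/(2πx²)) ∫_ℝ e^{−izx} (π²/4)(1/cosh(πz/2))² dz = 1/(x(e^x − e^{−x}))`. Equivalently,
with `ψ(z) = −log cosh(πz/2)`, the formula `u(x) = −(1/(2πx²)) ∫_ℝ e^{−izx} ψ''(z) dz`
yields `u(x) = 1/(x(e^x − e^{−x}))`. -/
theorem statement15 :
    (∀ x : ℝ, x ≠ 0 →
      (1 / (2 * (Real.pi : ℂ) * (x : ℂ) ^ 2)) *
          (∫ z : ℝ, Complex.exp (-(Complex.I * (z : ℂ) * (x : ℂ))) *
            ((Real.pi ^ 2 / 4 * (1 / Real.cosh (Real.pi * z / 2)) ^ 2 : ℝ) : ℂ))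
        = ((1 / (x * (Real.exp x - Real.exp (-x))) : ℝ) : ℂ)) ∧
    (∀ ψ : ℝ → ℂ, (∀ z : ℝ, ψ z = -Complex.log ((Real.cosh (Real.pi * z / 2) : ℝ) : ℂ)) →
      ∀ x : ℝ, x ≠ 0 →
        -(1 / (2 * (Real.pi : ℂ) * (x : ℂ) ^ 2)) *
            (∫ z : ℝ, Complex.exp (-(Complex.I * (z : ℂ) * (x : ℂ))) * deriv (deriv ψ) z)
          = ((1 / (x * (Real.exp x - Real.exp (-x))) : ℝ) : ℂ)) := by
  refine ⟨main_int, fun ψ hψ x hx => ?_⟩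
  rw [← main_int x hx]
  simp_rw [deriv2 ψ hψ, mul_neg]
  rw [integral_neg, neg_mul_neg]
end

section
/- (Uniqueness via the transform.) Let U₁ and U₂ be two Lévy measures on ℝ (measures with Uⱼ({0}) = 0 and ∫_ℝ min(1, x²) Uⱼ(dx) < ∞). If ∫_ℝ e^{izx} · 2(1 − sin x/x) U₁(dx) = ∫_ℝ e^{izx} · 2(1 − sin x/x) U₂(dx) for every z ∈ ℝ, then U₁ = U₂. -/
open MeasureTheory

noncomputable def wgt (x : ℝ) : ℝ := if x = 0 then 0 else 2 * (1 - Real.sin x / x)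

lemma wgt_measurable : Measurable wgt := by
  unfold wgt
  refine Measurable.ite (measurableSet_singleton 0) measurable_const ?_
  fun_prop

lemma wgt_neg (x : ℝ) : wgt (-x) = wgt x := by
  simp [wgt, neg_div_neg_eq]

lemma wgt_bounds_pos {x : ℝ} (hx : 0 < x) : 0 < wgt x ∧ wgt x ≤ 4 * min 1 (x ^ 2) := by
  have h1 : Real.sin x / x < 1 := by
    rw [div_lt_one hx]; exact Real.sin_lt hx
  have h2 : 1 - x ^ 2 / 6 ≤ Real.sin x / x := by
    rw [le_div_iff₀ hx]
    have := Real.sin_ge_sub_cube hx.le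
    linarith
  have h3 : -1 ≤ Real.sin x / x := by
    have := Real.neg_one_le_sinc x
    rwa [Real.sinc_of_ne_zero hx.ne'] at this
  simp only [wgt, hx.ne', if_false]
  refine ⟨by linarith, ?_⟩
  rcases min_cases (1 : ℝ) (x ^ 2) with h | h <;> rw [h.1] <;> nlinarith [sq_nonneg x]

lemma wgt_bounds {x : ℝ} (hx : x ≠ 0) : 0 < wgt x ∧ wgt x ≤ 4 * min 1 (x ^ 2) := by
  rcases lt_or_gt_of_ne hx with h | h
  · have := wgt_bounds_pos (neg_pos.2 h)
    rwa [wgt_neg, neg_sq] at this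
  · exact wgt_bounds_pos h

lemma wgt_nonneg (x : ℝ) : 0 ≤ wgt x := by
  by_cases hx : x = 0
  · simp [wgt, hx]
  · exact (wgt_bounds hx).1.le

noncomputable def wdens (x : ℝ) : ENNReal := ENNReal.ofReal (wgt x)

lemma wdens_measurable : Measurable wdens := wgt_measurable.ennreal_ofReal

lemma finite_rho (U : Measure ℝ)
    (hU : ∫⁻ x, ENNReal.ofReal (min 1 (x ^ 2)) ∂U < ⊤) : IsFiniteMeasure (U.withDensity wdens) := by
  refine isFiniteMeasure_withDensity (ne_of_lt ?_)
  calc ∫⁻ x, wdens x ∂U ≤ ∫⁻ x, 4 * ENNReal.ofReal (min 1 (x ^ 2)) ∂U := by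
        refine lintegral_mono fun x => ?_
        have h4 : (4 : ENNReal) = ENNReal.ofReal 4 := by simp
        rw [h4, ← ENNReal.ofReal_mul (by norm_num)]
        refine ENNReal.ofReal_le_ofReal ?_
        by_cases hx : x = 0
        · simp [wgt, hx]
        · exact (wgt_bounds hx).2
    _ = 4 * ∫⁻ x, ENNReal.ofReal (min 1 (x ^ 2)) ∂U :=
        lintegral_const_mul' _ _ (by simp)
    _ < ⊤ := ENNReal.mul_lt_top (by simp) hU

lemma charFun_rho (U : Measure ℝ) (z : ℝ) : charFun (U.withDensity wdens) z =
    ∫ x, Complex.exp (Complex.I * (z : ℂ) * (x : ℂ)) *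
          ((if x = 0 then 0 else 2 * (1 - Real.sin x / x) : ℝ) : ℂ) ∂U := by
  rw [charFun_apply_real, integral_withDensity_eq_integral_toReal_smul wdens_measurable
    (by filter_upwards with x using ENNReal.ofReal_lt_top)]
  refine integral_congr_ae (Filter.Eventually.of_forall fun x => ?_)
  change (wdens x).toReal • _ = _ * ((wgt x : ℝ) : ℂ)
  rw [wdens, ENNReal.toReal_ofReal (wgt_nonneg x), Complex.real_smul, mul_comm]
  congr 2
  ring

lemma recover (U : Measure ℝ) (h0 : U {0} = 0) :
    (U.withDensity wdens).withDensity (wdens⁻¹) = U := by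
  refine withDensity_inv_same wdens_measurable ?_ ?_
  · have : ∀ᵐ x ∂U, x ≠ 0 := by
      rw [ae_iff]; simpa using h0
    filter_upwards [this] with x hx
    simpa [wdens] using (wgt_bounds hx).1
  · filter_upwards with x using ENNReal.ofReal_ne_top


/-- **uniqueness via the transform.** If two Lévy measures `U₁`, `U₂` on
`ℝ` have the same transform `z ↦ ∫_ℝ e^{izx} · 2(1 − sin x/x) U(dx)` (with `1 − sin x/x`
interpreted as `0` at `x = 0`), then `U₁ = U₂`. -/
theorem statement18
    (U₁ U₂ : Measure ℝ)
    (hU₁0 : U₁ {0} = 0) (hU₂0 : U₂ {0} = 0)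
    (hU₁fin : ∫⁻ x, ENNReal.ofReal (min 1 (x ^ 2)) ∂U₁ < ⊤)
    (hU₂fin : ∫⁻ x, ENNReal.ofReal (min 1 (x ^ 2)) ∂U₂ < ⊤)
    (heq : ∀ z : ℝ,
      (∫ x, Complex.exp (Complex.I * (z : ℂ) * (x : ℂ)) *
          ((if x = 0 then 0 else 2 * (1 - Real.sin x / x) : ℝ) : ℂ) ∂U₁)
        = ∫ x, Complex.exp (Complex.I * (z : ℂ) * (x : ℂ)) *
            ((if x = 0 then 0 else 2 * (1 - Real.sin x / x) : ℝ) : ℂ) ∂U₂) :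
    U₁ = U₂ := by
  have := finite_rho U₁ hU₁fin
  have := finite_rho U₂ hU₂fin
  have h : U₁.withDensity wdens = U₂.withDensity wdens := by
    apply Measure.ext_of_charFun
    funext z
    rw [charFun_rho, charFun_rho]
    exact heq z
  rw [← recover U₁ hU₁0, h, recover U₂ hU₂0]
end
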